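/- Let D be a face-convex good drawing of K_n with outer face F, let uv be an edge of K_n, let W ⊆ V(K_n), and let {i,j} = {1,2}. If |(W ∪ {u,v}) ∩ Side(uv,j)| ≥ 3, then no vertex of Side(uv,i) ∖ {u,v} has its point in the convex hull Δ_{(W∪{u,v}) ∩ Side(uv,j)}. -/

import Mathlib

open Set Topology

noncomputable section

abbrev Plane : Type := EuclideanSpace ℝ (Fin 2)

abbrev SpherePt : Type := ↥(Metric.sphere (0 : EuclideanSpace ℝ (Fin 3)) 1)

/-- `γ` crosses the curve `σ` at `p`: `p` lies on both sets, and in every neighbourhood of `p`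
there is a smaller neighbourhood `V` such that `V \ σ` splits into two connected "sides",
both of which meet `γ`. -/
def CrossesAt {X : Type*} [TopologicalSpace X] (σ γ : Set X) (p : X) : Prop :=
  p ∈ σ ∧ p ∈ γ ∧ ∀ U ∈ nhds p, ∃ V ∈ nhds p, V ⊆ U ∧
    ∃ C₁ C₂ : Set X, V \ σ = C₁ ∪ C₂ ∧ Disjoint C₁ C₂ ∧
      IsPreconnected C₁ ∧ IsPreconnected C₂ ∧ (γ ∩ C₁).Nonempty ∧ (γ ∩ C₂).Nonempty

/-- `Δ` is one of the closed regions ("closed discs") bounded by the curve `C`: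
it is the union of `C` with a connected component of the complement of `C`. -/
def IsClosedSide {X : Type*} [TopologicalSpace X] (C Δ : Set X) : Prop :=
  ∃ q, q ∉ C ∧ Δ = connectedComponentIn Cᶜ q ∪ C

/-- `Δ` is one of the open regions ("open discs") bounded by the curve `C`. -/
def IsOpenSide {X : Type*} [TopologicalSpace X] (C Δ : Set X) : Prop :=
  ∃ q, q ∉ C ∧ Δ = connectedComponentIn Cᶜ q

/-- `G` is a face (a connected component of the complement) of the point set `A`. -/
def IsFaceOf {X : Type*} [TopologicalSpace X] (A G : Set X) : Prop :=
  ∃ q, q ∉ A ∧ G = connectedComponentIn Aᶜ q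

/-- A good drawing of the complete graph `K_n` in the space `X`. -/
structure GoodDrawing (n : ℕ) (X : Type*) [TopologicalSpace X] where
  vtx : Fin n → X
  arc : Fin n → Fin n → Set X
  vtx_inj : Function.Injective vtx
  arc_symm : ∀ u v, arc u v = arc v u
  isArc : ∀ u v, u ≠ v → ∃ f : ℝ → X, ContinuousOn f (Set.Icc 0 1) ∧
    Set.InjOn f (Set.Icc 0 1) ∧ f 0 = vtx u ∧ f 1 = vtx v ∧ arc u v = f '' Set.Icc 0 1
  vtx_not_mem : ∀ u v w, u ≠ v → w ≠ u → w ≠ v → vtx w ∉ arc u v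
  adj_arcs : ∀ u v w, u ≠ v → u ≠ w → v ≠ w → arc u v ∩ arc u w = {vtx u}
  indep_arcs : ∀ u v x y : Fin n, u ≠ v → x ≠ y → u ≠ x → u ≠ y → v ≠ x → v ≠ y →
    (arc u v ∩ arc x y).Subsingleton ∧
      ∀ p ∈ arc u v ∩ arc x y,
        CrossesAt (arc u v) (arc x y) p ∧ CrossesAt (arc x y) (arc u v) p
  no_triple_pt : ∀ p : X, p ∉ Set.range vtx → ∀ u v x y s t : Fin n,
    u ≠ v → x ≠ y → s ≠ t →
    ({u, v} : Finset (Fin n)) ≠ {x, y} → ({u, v} : Finset (Fin n)) ≠ {s, t} →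
    ({x, y} : Finset (Fin n)) ≠ {s, t} →
    ¬(p ∈ arc u v ∧ p ∈ arc x y ∧ p ∈ arc s t)

namespace GoodDrawing

variable {n : ℕ} {X : Type*} [TopologicalSpace X]

/-- The point set of the subdrawing induced by the set `W` of vertices. -/
def image (D : GoodDrawing n X) (W : Set (Fin n)) : Set X :=
  (D.vtx '' W) ∪ ⋃ u ∈ W, ⋃ v ∈ W, ⋃ (_ : u ≠ v), D.arc u v

/-- The simple closed curve that is the drawing of the 3-cycle on `a`, `b`, `c`. -/
def tri (D : GoodDrawing n X) (a b c : Fin n) : Set X :=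
  D.arc a b ∪ D.arc b c ∪ D.arc a c

/-- `Δ` is convex: it contains the arc between any two vertex points it contains. -/
def ConvexDisc (D : GoodDrawing n X) (Δ : Set X) : Prop :=
  ∀ x y : Fin n, x ≠ y → D.vtx x ∈ Δ → D.vtx y ∈ Δ → D.arc x y ⊆ Δ

/-- `F` is a face of the drawing `D`. -/
def IsFace (D : GoodDrawing n X) (F : Set X) : Prop :=
  IsFaceOf (D.image Set.univ) F

/-- `D` is face-convex with outer face `F`. -/
def FaceConvex (D : GoodDrawing n X) (F : Set X) : Prop :=
  D.IsFace F ∧ ∀ a b c : Fin n, a ≠ b → a ≠ c → b ≠ c →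
    ∀ Δ : Set X, IsClosedSide (D.tri a b c) Δ → ¬F ⊆ Δ → D.ConvexDisc Δ

/-- `D` is a convex drawing: every 3-cycle has at least one convex closed side. -/
def IsConvex (D : GoodDrawing n X) : Prop :=
  ∀ a b c : Fin n, a ≠ b → a ≠ c → b ≠ c →
    ∃ Δ : Set X, IsClosedSide (D.tri a b c) Δ ∧ D.ConvexDisc Δ

/-- The closed curve drawn by the cycle `c 0, c 1, …, c (m-1), c 0` of `K_n`. -/
def cycCurve (D : GoodDrawing n X) {m : ℕ} [NeZero m] (c : Fin m → Fin n) : Set X :=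
  ⋃ i : Fin m, D.arc (c i) (c (i + 1))

/-- `Δ` is the convex hull `Δ_W` of the vertex set `W` (relative to the outer face `F`):
the face of the subdrawing `D[W]` containing `F` is bounded by a cycle `C_W` on vertices
of `W`, and `Δ` is the closed disc bounded by `D[C_W]` disjoint from `F`. -/
def IsHull (D : GoodDrawing n X) (F : Set X) (W : Set (Fin n)) (Δ : Set X) : Prop :=
  ∃ (m : ℕ) (c : Fin (m + 3) → Fin n), Function.Injective c ∧ (∀ i, c i ∈ W) ∧
    (∃ G : Set X, IsFaceOf (D.image W) G ∧ F ⊆ G ∧ frontier G = D.cycCurve c) ∧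
    IsClosedSide (D.cycCurve c) Δ ∧ Disjoint F Δ

/-- The data of the two local sides `C 0`, `C 1` of the arc `D[uv]` at an interior
point `p` of the arc. -/
def LocalSides (D : GoodDrawing n X) (u v : Fin n) (p : X) (C : Fin 2 → Set X) : Prop :=
  p ∈ D.arc u v ∧ p ≠ D.vtx u ∧ p ≠ D.vtx v ∧
    ∃ V ∈ nhds p, C 0 ∪ C 1 = V \ D.arc u v ∧ Disjoint (C 0) (C 1) ∧
      IsPreconnected (C 0) ∧ IsPreconnected (C 1) ∧ (C 0).Nonempty ∧ (C 1).Nonempty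

/-- Relative to the outer face `F` and the local sides `C` of `D[uv]` at `p`, the
vertex `w` is on side `i` of `uv`: the closed disc bounded by `D[{u,v,w}]` not
containing `F` lies locally on side `i` of `D[uv]`. -/
def OnSide (D : GoodDrawing n X) (F : Set X) (u v : Fin n) (p : X) (C : Fin 2 → Set X)
    (i : Fin 2) (w : Fin n) : Prop :=
  w ≠ u ∧ w ≠ v ∧ ∃ Δ : Set X, IsClosedSide (D.tri u v w) Δ ∧ ¬F ⊆ Δ ∧
    ∃ V ∈ nhds p, C i ∩ V ⊆ Δ

/-- `Side(uv, i)`: the set consisting of `u`, `v` and all vertices on side `i` of `uv`. -/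
def SideSet (D : GoodDrawing n X) (F : Set X) (u v : Fin n) (p : X) (C : Fin 2 → Set X)
    (i : Fin 2) : Set (Fin n) :=
  {u, v} ∪ {w : Fin n | D.OnSide F u v p C i w}

/-- The edge-arcs `D[uv]` and `D[xy]` cross: they share a non-vertex point. -/
def Crosses (D : GoodDrawing n X) (u v x y : Fin n) : Prop :=
  ∃ p : X, p ∈ D.arc u v ∩ D.arc x y ∧ p ∉ Set.range D.vtx

/-- The set of empty triangles of `D`: pairs of a 3-set of vertices together with an
open disc bounded by the corresponding triangle containing no vertex point. -/
def emptyTriangles (D : GoodDrawing n X) : Set (Finset (Fin n) × Set X) :=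
  {T | ∃ a b c : Fin n, a ≠ b ∧ a ≠ c ∧ b ≠ c ∧ T.1 = {a, b, c} ∧
    IsOpenSide (D.tri a b c) T.2 ∧ ∀ i, D.vtx i ∉ T.2}

end GoodDrawing

/-- A pseudoline in the plane. -/
def IsPseudoline (σ : Set Plane) : Prop :=
  IsClosed σ ∧ Nonempty (↥σ ≃ₜ ℝ) ∧ ¬IsPreconnected σᶜ

/-- An arrangement of pseudolines: any two distinct members meet in exactly one
point, at which they cross. -/
def IsArrangement (A : Finset (Set Plane)) : Prop :=
  (∀ σ ∈ A, IsPseudoline σ) ∧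
    ∀ σ ∈ A, ∀ τ ∈ A, σ ≠ τ →
      ∃ p : Plane, σ ∩ τ = {p} ∧ CrossesAt σ τ p ∧ CrossesAt τ σ p

/-- A planar good drawing of `K_n` is pseudolinear if some arrangement of pseudolines
contains, for each edge, a distinct pseudoline containing that edge-arc. -/
def GoodDrawing.Pseudolinear {n : ℕ} (D : GoodDrawing n Plane) : Prop :=
  ∃ (A : Finset (Set Plane)) (L : Fin n → Fin n → Set Plane), IsArrangement A ∧
    (∀ u v, u ≠ v → L u v ∈ A ∧ D.arc u v ⊆ L u v) ∧
    (∀ u v, L u v = L v u) ∧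
    ∀ u v x y : Fin n, u ≠ v → x ≠ y →
      ({u, v} : Finset (Fin n)) ≠ {x, y} → L u v ≠ L x y

/-!
Project the sphere stereographically from a point of `F`. A triangle `a b c` is a Jordan curve; the
disc bounded by it that does not contain `F` consists of the points around which it winds, and its
orientation `ε(abc) ≠ 0` is its winding number around any of these points. Two triangles `a b c`
and `a b d` lie on opposite sides of `a b` exactly when their orientations are opposite, and if `d`
lies in the disc of `a b c`, then convexity of that disc gives `ε(abd) = ε(abc)`.

Suppose that `w` lies on side `i` of `u v` and in the convex hull of a set of vertices of
`Side(uv,j)`. The hull cycle winds around `w`, and its winding number is the sum of those of the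
triangles `u x y` over its edges `x y`, so `w` lies in the disc of one of them. Then `w` lies in the
disc of `v x y` too, and comparing the winding numbers of the triangles on `u, v, y, w` around a
point near the arc `u v` forces `ε(uxy)` to be `ε(uvw)` or `2 ε(uvw)`. Exchanging `x` and `y` gives
the same for `-ε(uxy)`, which is impossible.
-/

/-! ### Continuous logarithms -/

/-- `L` is a branch of `log ∘ f` on `K`. -/
def IsLogOn {X : Type*} [TopologicalSpace X] (f : X → ℂ) (K : Set X) (L : X → ℂ) : Prop :=
  ContinuousOn L K ∧ EqOn (Complex.exp ∘ L) f K

section Logarithm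

variable {X : Type*} [TopologicalSpace X]

theorem eq_of_exp_comp_eq_one {K : Set X} (hK : IsPreconnected K) {g : X → ℂ}
    (hg : ContinuousOn g K) (h1 : ∀ z ∈ K, Complex.exp (g z) = 1) {x y : X} (hx : x ∈ K)
    (hy : y ∈ K) : g x = g y := by
  have hexp : IsLocalHomeomorph Complex.exp := by
    rw [isLocalHomeomorph_iff_isLocalHomeomorphOn_univ]
    exact Complex.isCoveringMapOn_exp.isLocalHomeomorphOn.mono fun z _ => Complex.exp_ne_zero z
  exact (T2Space.isSeparatedMap _).constOn_of_comp hexp.isLocallyInjective hK hg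
    (fun a ha b hb => (h1 a ha).trans (h1 b hb).symm) hx hy

namespace IsLogOn

variable {f g : X → ℂ} {K K' : Set X} {L L' : X → ℂ}

theorem mono (h : IsLogOn f K L) (hK : K' ⊆ K) : IsLogOn f K' L :=
  ⟨h.1.mono hK, h.2.mono hK⟩

theorem exp_eq (h : IsLogOn f K L) {z : X} (hz : z ∈ K) : Complex.exp (L z) = f z :=
  h.2 hz

theorem ne_zero (h : IsLogOn f K L) {z : X} (hz : z ∈ K) : f z ≠ 0 :=
  h.exp_eq hz ▸ Complex.exp_ne_zero _

theorem congr (h : IsLogOn f K L) (hfg : EqOn f g K) : IsLogOn g K L :=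
  ⟨h.1, h.2.trans hfg⟩

theorem congr_log (h : IsLogOn f K L) (hL : EqOn L' L K) : IsLogOn f K L' :=
  ⟨h.1.congr hL, fun z hz => by simpa [hL hz] using h.2 hz⟩

theorem mul (h : IsLogOn f K L) (h' : IsLogOn g K L') :
    IsLogOn (fun z => f z * g z) K (fun z => L z + L' z) :=
  ⟨h.1.add h'.1, fun z hz => by simp [Complex.exp_add, h.exp_eq hz, h'.exp_eq hz]⟩

theorem zpow (h : IsLogOn f K L) (n : ℤ) :
    IsLogOn (fun z => f z ^ n) K (fun z => n * L z) :=
  ⟨continuousOn_const.mul h.1, fun z hz => by simp [Complex.exp_int_mul, h.exp_eq hz]⟩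

theorem add_const (h : IsLogOn f K L) (c : ℂ) :
    IsLogOn (fun z => f z * Complex.exp c) K (fun z => L z + c) :=
  h.mul ⟨continuousOn_const, fun _ _ => rfl⟩

theorem add_const_of_exp_eq_one (h : IsLogOn f K L) {c : ℂ} (hc : Complex.exp c = 1) :
    IsLogOn f K (fun z => L z + c) :=
  (h.add_const c).congr fun z _ => by simp [hc]

theorem sub_eq_sub (h : IsLogOn f K L) (hK : IsPreconnected K) (h' : IsLogOn f K L') {x y : X}
    (hx : x ∈ K) (hy : y ∈ K) : L y - L x = L' y - L' x := by
  have hone : ∀ z ∈ K, Complex.exp (L z - L' z) = 1 := fun z hz => by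
    rw [Complex.exp_sub, h.exp_eq hz, h'.exp_eq hz, div_self (h.ne_zero hz)]
  have hconst : L x - L' x = L y - L' y := eq_of_exp_comp_eq_one hK (h.1.sub h'.1) hone hx hy
  linear_combination -hconst

theorem exists_union_of_isOpen (h : IsLogOn f K L) (h' : IsLogOn f K' L') (hK : IsOpen K)
    (hK' : IsOpen K') (hL : EqOn L L' (K ∩ K')) : ∃ M, IsLogOn f (K ∪ K') M := by
  classical
  have hM : EqOn (K.piecewise L L') L K := piecewise_eqOn K L L'
  have hM' : EqOn (K.piecewise L L') L' K' := fun z hz => by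
    by_cases hzK : z ∈ K
    · exact (hM hzK).trans (hL ⟨hzK, hz⟩)
    · exact piecewise_eq_of_notMem _ _ _ hzK
  have hlog := h.congr_log hM
  have hlog' := h'.congr_log hM'
  exact ⟨_, hlog.1.union_of_isOpen hlog'.1 hK hK', hlog.2.union hlog'.2⟩

theorem exists_iUnion {ι : Type*} [Finite ι] {A : ι → Set X} {L : ι → X → ℂ}
    (hA : ∀ k, IsClosed (A k)) (h : ∀ k, IsLogOn f (A k) (L k))
    (hL : ∀ k l, EqOn (L k) (L l) (A k ∩ A l)) : ∃ M, IsLogOn f (⋃ k, A k) M := by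
  classical
  let M : X → ℂ := fun z => if hz : ∃ k, z ∈ A k then L hz.choose z else 0
  have hM : ∀ k, EqOn M (L k) (A k) := fun k z hz => by
    have hz' : ∃ k, z ∈ A k := ⟨k, hz⟩
    simpa only [M, dif_pos hz'] using hL _ _ ⟨hz'.choose_spec, hz⟩
  refine ⟨M, (locallyFinite_of_finite A).continuousOn_iUnion hA
    fun k => ((h k).congr_log (hM k)).1, fun z hz => ?_⟩
  obtain ⟨k, hk⟩ := mem_iUnion.1 hz
  exact ((h k).congr_log (hM k)).2 hk

end IsLogOn

theorem sum_Iio_add_one_of_sum_eq_zero {G : Type*} [AddCommGroup G] {N : ℕ} [NeZero N]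
    {E : Fin N → G} (hE : ∑ k, E k = 0) (k : Fin N) :
    ∑ j ∈ Finset.Iio (k + 1), E j = ∑ j ∈ Finset.Iio k, E j + E k := by
  obtain ⟨N, rfl⟩ := Nat.exists_eq_succ_of_ne_zero (NeZero.ne N)
  rw [Finset.sum_Iio_add_eq_sum_Iic]
  rcases eq_or_ne k (Fin.last N) with rfl | hk
  · have hIio : Finset.Iio (0 : Fin (N + 1)) = ∅ := Finset.Iio_bot
    have hIic : Finset.Iic (Fin.last N) = Finset.univ := Finset.Iic_top
    rw [Fin.last_add_one, hIio, hIic, hE, Finset.sum_empty]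
  · congr 1
    ext j
    have hk1 : ((k + 1 : Fin (N + 1)) : ℕ) = k + 1 :=
      Fin.val_add_one_of_lt (Fin.lt_last_iff_ne_last.2 hk)
    simp only [Finset.mem_Iio, Finset.mem_Iic, Fin.lt_def, Fin.le_def, hk1]
    omega

/-- The branches are adjusted by constants one after another along the cycle; the last one then
matches the first because the variations add up to zero. -/
theorem IsLogOn.exists_iUnion_cycle {N : ℕ} [NeZero N] {f : X → ℂ} {A : Fin N → Set X}
    {x : Fin N → X} {L : Fin N → X → ℂ} (hA : ∀ k, IsClosed (A k)) (hx : ∀ k, x k ∈ A k)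
    (hx' : ∀ k, x (k + 1) ∈ A k)
    (hmeet : ∀ k l, k ≠ l → ∀ z ∈ A k ∩ A l, (l = k + 1 ∧ z = x l) ∨ (k = l + 1 ∧ z = x k))
    (hL : ∀ k, IsLogOn f (A k) (L k)) (hsum : ∑ k, (L k (x (k + 1)) - L k (x k)) = 0) :
    ∃ M, IsLogOn f (⋃ k, A k) M := by
  let E : Fin N → ℂ := fun k => L k (x (k + 1)) - L (k + 1) (x (k + 1))
  have hE : ∀ k, Complex.exp (E k) = 1 := fun k => by
    simp only [E]
    rw [Complex.exp_sub, (hL k).exp_eq (hx' k), (hL (k + 1)).exp_eq (hx (k + 1)),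
      div_self ((hL k).ne_zero (hx' k))]
  have hEsum : ∑ k, E k = 0 := by
    rw [← hsum, Finset.sum_sub_distrib, Finset.sum_sub_distrib]
    congr 1
    exact Equiv.sum_comp (Equiv.addRight (1 : Fin N)) fun k => L k (x k)
  let t : Fin N → ℂ := fun k => ∑ j ∈ Finset.Iio k, E j
  have ht : ∀ k, Complex.exp (t k) = 1 := fun k => by
    simp only [t, Complex.exp_sum, hE, Finset.prod_const_one]
  have hnext : ∀ k, L k (x (k + 1)) + t k = L (k + 1) (x (k + 1)) + t (k + 1) := fun k => by
    simp only [t, sum_Iio_add_one_of_sum_eq_zero hEsum k, E]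
    ring
  refine IsLogOn.exists_iUnion hA (fun k => (hL k).add_const_of_exp_eq_one (ht k))
    fun k l z hz => ?_
  by_cases hkl : k = l
  · rw [hkl]
  rcases hmeet k l hkl z hz with ⟨rfl, rfl⟩ | ⟨rfl, rfl⟩
  · exact hnext k
  · exact (hnext l).symm

theorem eq_zero_of_isLogOn_zpow_sphere {c : ℂ} {R : ℝ} (hR : 0 < R) {n : ℤ} {L : ℂ → ℂ}
    (hL : IsLogOn (fun z => (z - c) ^ n) (Metric.sphere c R) L) : n = 0 := by
  let γ : ℝ → ℂ := circleMap c R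
  have hγ : ∀ t, γ t ∈ Metric.sphere c R := circleMap_mem_sphere c hR.le
  let g : ℝ → ℂ := fun t => L (γ t) - n * (t * Complex.I + Real.log R)
  have hg : Continuous g :=
    (hL.1.comp_continuous (continuous_circleMap c R) hγ).sub (by fun_prop)
  have hexp : ∀ t : ℝ, Complex.exp (t * Complex.I + Real.log R) = γ t - c := fun t => by
    rw [Complex.exp_add, ← Complex.ofReal_exp, Real.exp_log hR, mul_comm]
    simp only [γ, circleMap, add_sub_cancel_left]
  have hone : ∀ t, Complex.exp (g t) = 1 := fun t => by
    rw [Complex.exp_sub, hL.exp_eq (hγ t), Complex.exp_int_mul, hexp,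
      div_self (hL.ne_zero (hγ t))]
  have hper : γ (2 * Real.pi) = γ 0 := by
    simp [γ, circleMap]
  have hturn := eq_of_exp_comp_eq_one isPreconnected_univ hg.continuousOn (fun t _ => hone t)
    (mem_univ 0) (mem_univ (2 * Real.pi))
  have hn : (n : ℂ) * (2 * Real.pi * Complex.I) = 0 := by
    simp only [g, hper] at hturn
    push_cast at hturn
    linear_combination hturn
  simpa [Real.pi_ne_zero] using hn

theorem exists_isLogOn_univ [SimplyConnectedSpace X] [LocallyPathConnectedSpace X] {f : X → ℂ}
    (hf : Continuous f) (h0 : ∀ z, f z ≠ 0) : ∃ L, IsLogOn f univ L :=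
  Complex.exists_continuousOn_eqOn_exp_comp
    (Homeomorph.Set.univ X).toHomotopyEquiv.simplyConnectedSpace isOpen_univ hf.continuousOn
    fun ⟨z, _, hz⟩ => h0 z hz

/-! ### Variation of the logarithm -/

open scoped Classical in
/-- The variation from `x` to `y` of a branch of `log ∘ f` on `A`, and `0` if there is no such
branch. It does not depend on the branch if `A` is connected and contains `x` and `y`. -/
def logVar (A : Set X) (f : X → ℂ) (x y : X) : ℂ :=
  if h : ∃ L, IsLogOn f A L then h.choose y - h.choose x else 0

variable {A : Set X} {f : X → ℂ} {x y : X}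

theorem logVar_swap (A : Set X) (f : X → ℂ) (x y : X) : logVar A f y x = -logVar A f x y := by
  unfold logVar
  split_ifs <;> ring

theorem IsLogOn.logVar_eq {L : X → ℂ} (h : IsLogOn f A L) (hA : IsPreconnected A) (hx : x ∈ A)
    (hy : y ∈ A) : logVar A f x y = L y - L x := by
  have hex : ∃ L, IsLogOn f A L := ⟨L, h⟩
  rw [logVar, dif_pos hex]
  exact hex.choose_spec.sub_eq_sub hA h hx hy

theorem exp_logVar {L : X → ℂ} (h : IsLogOn f A L) (hA : IsPreconnected A) (hx : x ∈ A)
    (hy : y ∈ A) : Complex.exp (logVar A f x y) = f y / f x := by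
  rw [h.logVar_eq hA hx hy, Complex.exp_sub, h.exp_eq hx, h.exp_eq hy]

theorem logVar_const_mul {L : X → ℂ} (h : IsLogOn f A L) (hA : IsPreconnected A) (hx : x ∈ A)
    (hy : y ∈ A) {c : ℂ} (hc : c ≠ 0) :
    logVar A (fun z => c * f z) x y = logVar A f x y := by
  have h' : IsLogOn (fun z => c * f z) A fun z => L z + Complex.log c :=
    (h.add_const _).congr fun z _ => by simp only [Complex.exp_log hc, mul_comm]
  rw [h.logVar_eq hA hx hy, h'.logVar_eq hA hx hy]
  ring

/-- Near `q₀` the quotient `k q / k q₀` is close to `1` on the compact set `A`, so the principal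
branch provides its logarithm. -/
theorem continuousAt_logVar {Y : Type*} [TopologicalSpace Y] {k : Y → X → ℂ} {q₀ : Y}
    (hA : IsPreconnected A) (hAc : IsCompact A) (hx : x ∈ A) (hy : y ∈ A)
    (hk : ∀ z ∈ A, ContinuousAt (Function.uncurry k) (q₀, z))
    (hkA : ∀ᶠ q in 𝓝 q₀, ContinuousOn (k q) A) {L : X → ℂ} (hL : IsLogOn (k q₀) A L) :
    ContinuousAt (fun q => logVar A (k q) x y) q₀ := by
  have hkq : ∀ z ∈ A, ContinuousAt (fun q => k q z) q₀ := fun z hz =>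
    (hk z hz).comp (f := fun q => (q, z)) (by fun_prop)
  have hkz : ∀ z ∈ A, ContinuousAt (k q₀) z := fun z hz =>
    (hk z hz).comp (f := fun z => (q₀, z)) (by fun_prop)
  have hslit : ∀ᶠ q in 𝓝 q₀, ∀ z ∈ A, k q z / k q₀ z ∈ Complex.slitPlane := by
    refine hAc.eventually_forall_of_forall_eventually fun z hz => ?_
    have hquot : ContinuousAt (fun p : Y × X => k p.1 p.2 / k q₀ p.2) (q₀, z) :=
      (hk z hz).div ((hkz z hz).comp continuousAt_snd) (hL.ne_zero hz)
    refine hquot.eventually_mem (Complex.isOpen_slitPlane.mem_nhds ?_)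
    simp [div_self (hL.ne_zero hz)]
  have hform : (fun q => logVar A (k q) x y) =ᶠ[𝓝 q₀] fun q =>
      L y - L x + (Complex.log (k q y / k q₀ y) - Complex.log (k q x / k q₀ x)) := by
    filter_upwards [hslit, hkA] with q hq hqA
    have hlog : IsLogOn (k q) A fun z => L z + Complex.log (k q z / k q₀ z) := by
      have hquot : IsLogOn (fun z => k q z / k q₀ z) A fun z => Complex.log (k q z / k q₀ z) :=
        ⟨(hqA.div (fun z hz => (hkz z hz).continuousWithinAt) fun z hz => hL.ne_zero hz).clog hq,
          fun z hz => Complex.exp_log (Complex.slitPlane_ne_zero (hq z hz))⟩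
      exact (hL.mul hquot).congr fun z hz => mul_div_cancel₀ _ (hL.ne_zero hz)
    rw [hlog.logVar_eq hA hx hy]
    ring
  have hone : ∀ z ∈ A, ContinuousAt (fun q => Complex.log (k q z / k q₀ z)) q₀ := fun z hz =>
    ((hkq z hz).div_const _).clog (by simp [div_self (hL.ne_zero hz)])
  exact (continuousAt_const.add ((hone y hy).sub (hone x hx))).congr hform.symm

end Logarithm

/-! ### Arcs -/

/-- `A` is a simple arc with end points `x` and `y`, parametrised from `x` to `y` by `[0, 1]`. -/
def IsArcBetween {X : Type*} [TopologicalSpace X] (A : Set X) (x y : X) : Prop :=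
  ∃ f : ℝ → X, ContinuousOn f (Icc 0 1) ∧ InjOn f (Icc 0 1) ∧ f 0 = x ∧ f 1 = y ∧
    A = f '' Icc 0 1

namespace IsArcBetween

variable {X : Type*} [TopologicalSpace X] {A : Set X} {x y : X}

theorem isCompact (h : IsArcBetween A x y) : IsCompact A := by
  obtain ⟨f, hf, -, -, -, rfl⟩ := h
  exact isCompact_Icc.image_of_continuousOn hf

theorem isClosed [T2Space X] (h : IsArcBetween A x y) : IsClosed A :=
  h.isCompact.isClosed

theorem isPreconnected (h : IsArcBetween A x y) : IsPreconnected A := by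
  obtain ⟨f, hf, -, -, -, rfl⟩ := h
  exact isPreconnected_Icc.image _ hf

theorem left_mem (h : IsArcBetween A x y) : x ∈ A := by
  obtain ⟨f, -, -, rfl, -, rfl⟩ := h
  exact ⟨0, by simp, rfl⟩

theorem right_mem (h : IsArcBetween A x y) : y ∈ A := by
  obtain ⟨f, -, -, -, rfl, rfl⟩ := h
  exact ⟨1, by simp, rfl⟩

theorem ne (h : IsArcBetween A x y) : x ≠ y := by
  obtain ⟨f, -, hi, rfl, rfl, -⟩ := h
  exact fun h01 => zero_ne_one (hi (by simp) (by simp) h01)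

theorem subset_closure_diff (h : IsArcBetween A x y) : A ⊆ closure (A \ {x, y}) := by
  obtain ⟨f, hf, hi, rfl, rfl, rfl⟩ := h
  have hinterior : f '' Ioo 0 1 ⊆ f '' Icc 0 1 \ {f 0, f 1} := by
    rintro _ ⟨t, ht, rfl⟩
    have htI := Ioo_subset_Icc_self ht
    refine ⟨mem_image_of_mem f htI, ?_⟩
    rintro (h0 | h1)
    · exact ht.1.ne' (hi htI (by simp) h0)
    · exact ht.2.ne (hi htI (by simp) h1)
  rw [← closure_Ioo zero_ne_one] at hf
  calc f '' Icc 0 1 = f '' closure (Ioo 0 1) := by rw [closure_Ioo zero_ne_one]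
    _ ⊆ closure (f '' Ioo 0 1) := hf.image_closure
    _ ⊆ _ := closure_mono hinterior

theorem exists_split [T2Space X] (h : IsArcBetween A x y) {p : X} (hp : p ∈ A) :
    ∃ A₁ A₂ : Set X, IsClosed A₁ ∧ IsClosed A₂ ∧ A = A₁ ∪ A₂ ∧ A₁ ∩ A₂ ⊆ {p} ∧
      x ∈ A₁ ∧ y ∈ A₂ := by
  obtain ⟨f, hf, hi, rfl, rfl, rfl⟩ := h
  obtain ⟨t, ht, rfl⟩ := hp
  have h1 : Icc 0 t ⊆ Icc (0 : ℝ) 1 := Icc_subset_Icc_right ht.2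
  have h2 : Icc t 1 ⊆ Icc (0 : ℝ) 1 := Icc_subset_Icc_left ht.1
  refine ⟨f '' Icc 0 t, f '' Icc t 1, (isCompact_Icc.image_of_continuousOn (hf.mono h1)).isClosed,
    (isCompact_Icc.image_of_continuousOn (hf.mono h2)).isClosed, ?_, ?_,
    mem_image_of_mem f (left_mem_Icc.2 ht.1), mem_image_of_mem f (right_mem_Icc.2 ht.2)⟩
  · rw [← image_union, Icc_union_Icc_eq_Icc ht.1 ht.2]
  · rw [← hi.image_inter h1 h2, Icc_inter_Icc_eq_singleton ht.1 ht.2, image_singleton]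

theorem exists_isLogOn [T2Space X] (h : IsArcBetween A x y) {f : X → ℂ} (hf : ContinuousOn f A)
    (h0 : ∀ z ∈ A, f z ≠ 0) : ∃ L, IsLogOn f A L := by
  obtain ⟨γ, hγ, hi, -, -, rfl⟩ := h
  have hmem : ∀ t : Icc (0 : ℝ) 1, γ t ∈ γ '' Icc 0 1 := fun t => mem_image_of_mem γ t.2
  let g : Icc (0 : ℝ) 1 → X := (Icc 0 1).domRestrict γ
  have hg : IsEmbedding g :=
    (hγ.domRestrict.isClosedEmbedding (injOn_iff_injective.1 hi)).isEmbedding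
  obtain ⟨l, hl⟩ := exists_isLogOn_univ
    ((hf.comp_continuous hγ.domRestrict hmem).comp (continuous_projIcc (h := zero_le_one)))
    fun t => h0 _ (hmem _)
  have hext : ∀ t : Icc (0 : ℝ) 1, Function.extend g (fun t => l t) 0 (g t) = l t :=
    hg.injective.extend_apply _ _
  refine ⟨Function.extend g (fun t => l t) 0, ?_, ?_⟩
  · rw [show γ '' Icc 0 1 = range g by rw [range_domRestrict],
      continuousOn_iff_continuous_domRestrict, ← hg.toHomeomorph.comp_continuous_iff']
    exact ((continuousOn_univ.1 hl.1).comp continuous_subtype_val).congr fun t => (hext t).symm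
  · rintro _ ⟨t, ht, rfl⟩
    have hlt := hl.exp_eq (mem_univ t)
    rw [Function.comp_apply, projIcc_of_mem zero_le_one ht] at hlt
    exact (congrArg Complex.exp (hext ⟨t, ht⟩)).trans hlt

theorem exists_isLogOn_diff [T2Space X] (h : IsArcBetween A x y) {f L : X → ℂ}
    (hL : IsLogOn f A L) {p : X} (hp : p ∈ A) {N : Set X} (hN : IsOpen N) (hpN : p ∈ N)
    (hy : y ∉ N) {c : ℂ} (hc : Complex.exp c = 1) :
    ∃ L', IsLogOn f (A \ N) L' ∧ L' x = L x ∧ L' y = L y + c := by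
  classical
  obtain ⟨A₁, A₂, hA₁, hA₂, rfl, hA, hx₁, hy₂⟩ := h.exists_split hp
  have hdisj : ∀ z ∈ A₂ \ N, z ∉ A₁ := fun z hz hz₁ => hz.2 (hA ⟨hz₁, hz.1⟩ ▸ hpN)
  let L' : X → ℂ := A₁.piecewise L fun z => L z + c
  have hL₁ : EqOn L' L (A₁ \ N) := fun z hz => piecewise_eq_of_mem _ _ _ hz.1
  have hL₂ : EqOn L' (fun z => L z + c) (A₂ \ N) := fun z hz =>
    piecewise_eq_of_notMem _ _ _ (hdisj z hz)
  have hlog₁ : IsLogOn f (A₁ \ N) L' :=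
    (hL.mono (sdiff_subset.trans subset_union_left)).congr_log hL₁
  have hlog₂ : IsLogOn f (A₂ \ N) L' :=
    ((hL.mono (sdiff_subset.trans subset_union_right)).add_const_of_exp_eq_one hc).congr_log hL₂
  refine ⟨L', ?_, piecewise_eq_of_mem _ _ _ hx₁, hL₂ ⟨hy₂, hy⟩⟩
  rw [union_sdiff_distrib]
  exact ⟨hlog₁.1.union_of_isClosed hlog₂.1 (hA₁.sdiff hN) (hA₂.sdiff hN),
    hlog₁.2.union hlog₂.2⟩

end IsArcBetween

/-! ### Stereographic charts -/

/-- The function agreeing with `(z - c) ^ n` outside `U` and with `exp` of an extension of `L`,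
divided by `g`, inside has a logarithm on the whole plane, in particular on a large circle. -/
theorem eq_zero_of_isLogOn_zpow_mul_frontier {U : Set ℂ} (hU : IsOpen U)
    (hb : Bornology.IsBounded U) {c : ℂ} (hc : c ∈ U) {n : ℤ} {g L : ℂ → ℂ}
    (hg : ContinuousOn g (closure U)) (hg0 : ∀ z ∈ closure U, g z ≠ 0)
    (hL : IsLogOn (fun z => (z - c) ^ n * g z) (frontier U) L) : n = 0 := by
  classical
  obtain ⟨ψ, hψ⟩ := ContinuousMap.exists_restrict_eq (Y := ℂ) isClosed_frontier
    ⟨(frontier U).domRestrict L, hL.1.domRestrict⟩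
  have hψL : ∀ z ∈ frontier U, ψ z = L z := fun z hz => DFunLike.congr_fun hψ ⟨z, hz⟩
  have hUc : closure Uᶜ = Uᶜ := hU.isClosed_compl.closure_eq
  have hsub : ∀ z ∈ Uᶜ, z - c ≠ 0 := fun z hz h => hz (sub_eq_zero.1 h ▸ hc)
  let H : ℂ → ℂ := U.piecewise (fun z => Complex.exp (ψ z) / g z) fun z => (z - c) ^ n
  have hHc : Continuous H := by
    refine continuous_piecewise (fun z hz => ?_) ?_ ?_
    · rw [hψL z hz, hL.exp_eq hz, mul_div_cancel_right₀ _ (hg0 z hz.1)]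
    · exact (by fun_prop : ContinuousOn (fun z => Complex.exp (ψ z)) _).div hg hg0
    · rw [hUc]
      exact (by fun_prop : ContinuousOn (fun z => z - c) _).zpow₀ n fun z hz => Or.inl (hsub z hz)
  have hH0 : ∀ z, H z ≠ 0 := fun z => by
    by_cases hz : z ∈ U
    · simp only [H, piecewise_eq_of_mem _ _ _ hz]
      exact div_ne_zero (Complex.exp_ne_zero _) (hg0 z (subset_closure hz))
    · simp only [H, piecewise_eq_of_notMem _ _ _ hz]
      exact zpow_ne_zero _ (hsub z hz)
  obtain ⟨M, hM⟩ := exists_isLogOn_univ hHc hH0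
  obtain ⟨R, hR0, hR⟩ := hb.subset_ball_lt 0 c
  refine eq_zero_of_isLogOn_zpow_sphere (c := c) hR0
    ((hM.mono (subset_univ _)).congr fun z hz => piecewise_eq_of_notMem _ _ _ fun hzU => ?_)
  exact (Metric.mem_ball.1 (hR hzU)).ne hz

section Components

variable {X : Type*} [TopologicalSpace X] [LocallyConnectedSpace X] {K : Set X}

theorem closure_connectedComponentIn_compl_subset (hK : IsClosed K) (q : X) :
    closure (connectedComponentIn Kᶜ q) ⊆ connectedComponentIn Kᶜ q ∪ K := by
  refine fun z hz => or_iff_not_imp_right.2 fun hzK => ?_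
  obtain ⟨w, hwz, hwq⟩ := mem_closure_iff.1 hz _ hK.isOpen_compl.connectedComponentIn
    (mem_connectedComponentIn hzK)
  rw [connectedComponentIn_eq hwq, ← connectedComponentIn_eq hwz]
  exact mem_connectedComponentIn hzK

theorem frontier_connectedComponentIn_compl_subset (hK : IsClosed K) (q : X) :
    frontier (connectedComponentIn Kᶜ q) ⊆ K := by
  rw [hK.isOpen_compl.connectedComponentIn.frontier_eq]
  exact sdiff_subset_iff.2 (closure_connectedComponentIn_compl_subset hK q)

end Components

/-- A homeomorphism of `X` minus one point, the pole, onto the complex plane. -/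
structure StereoChart (X : Type*) [TopologicalSpace X] where
  /-- the underlying homeomorphism -/
  coord : OpenPartialHomeomorph X ℂ
  /-- the omitted point -/
  pole : X
  source_eq : coord.source = {pole}ᶜ
  target_eq : coord.target = univ

namespace StereoChart

variable {X : Type*} [TopologicalSpace X] (S : StereoChart X)

theorem mem_source {z : X} (hz : z ≠ S.pole) : z ∈ S.coord.source := by
  rwa [S.source_eq, mem_compl_singleton_iff]

theorem continuousAt_coord {z : X} (hz : z ≠ S.pole) : ContinuousAt S.coord z :=
  S.coord.continuousAt (S.mem_source hz)

theorem coord_ne_coord {q z : X} (hq : q ≠ S.pole) (hz : z ≠ S.pole) (hqz : q ≠ z) :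
    S.coord q ≠ S.coord z :=
  S.coord.injOn.ne (S.mem_source hq) (S.mem_source hz) hqz

theorem continuous_symm : Continuous S.coord.symm := by
  rw [← continuousOn_univ, ← S.target_eq]
  exact S.coord.continuousOn_symm

theorem coord_symm (w : ℂ) : S.coord (S.coord.symm w) = w :=
  S.coord.right_inv (S.target_eq ▸ mem_univ w)

theorem symm_coord {z : X} (hz : z ≠ S.pole) : S.coord.symm (S.coord z) = z :=
  S.coord.left_inv (S.mem_source hz)

theorem symm_ne_pole (w : ℂ) : S.coord.symm w ≠ S.pole := by
  have hw := S.coord.map_target (S.target_eq ▸ mem_univ w)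
  rwa [S.source_eq, mem_compl_singleton_iff] at hw

theorem tendsto_coord_cocompact [T2Space X] :
    Filter.Tendsto S.coord (𝓝[≠] S.pole) (Filter.cocompact ℂ) := by
  refine Filter.hasBasis_cocompact.tendsto_right_iff.2 fun K hK => ?_
  have hpole : S.pole ∉ S.coord.symm '' K := fun ⟨w, _, hw⟩ => S.symm_ne_pole w hw
  have hopen : IsOpen (S.coord.symm '' K)ᶜ :=
    (hK.image S.continuous_symm).isClosed.isOpen_compl
  filter_upwards [nhdsWithin_le_nhds (hopen.mem_nhds hpole), self_mem_nhdsWithin] with q hq hqp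
  exact fun hqK => hq ⟨S.coord q, hqK, S.symm_coord hqp⟩

open scoped Classical in
/-- The vector from `q` to `z` in the chart. The pole sees all points in the same direction,
encoded by the constant vector `1`. -/
def disp (q z : X) : ℂ :=
  if q = S.pole then 1 else S.coord z - S.coord q

variable {S} {q z : X} {A : Set X} {x y : X}

theorem disp_pole (z : X) : S.disp S.pole z = 1 :=
  if_pos rfl

theorem disp_of_ne_pole (hq : q ≠ S.pole) (z : X) : S.disp q z = S.coord z - S.coord q :=
  if_neg hq

theorem disp_ne_zero (hqz : q ≠ z) (hz : z ≠ S.pole) : S.disp q z ≠ 0 := by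
  by_cases hq : q = S.pole
  · simp [hq, disp_pole]
  · rw [disp_of_ne_pole hq, sub_ne_zero]
    exact S.coord_ne_coord hz hq hqz.symm

theorem continuousOn_disp (hA : S.pole ∉ A) (q : X) : ContinuousOn (S.disp q) A := by
  by_cases hq : q = S.pole
  · exact continuousOn_const.congr fun z _ => hq ▸ disp_pole z
  · exact fun z hz => (((S.continuousAt_coord (ne_of_mem_of_not_mem hz hA)).sub
      continuousAt_const).congr (.of_forall fun w => (disp_of_ne_pole hq w).symm)
      ).continuousWithinAt

theorem exists_isLogOn_disp [T2Space X] (h : IsArcBetween A x y) (hA : S.pole ∉ A)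
    (hq : q ∉ A) : ∃ L, IsLogOn (S.disp q) A L :=
  h.exists_isLogOn (continuousOn_disp hA q) fun _ hz =>
    disp_ne_zero (ne_of_mem_of_not_mem hz hq).symm (ne_of_mem_of_not_mem hz hA)

variable (S) in
/-- The variation of the logarithm of the vector from `q` to a point running along `A` from `x`
to `y`; its imaginary part is the angle by which this vector turns. -/
def turn (A : Set X) (q x y : X) : ℂ :=
  logVar A (S.disp q) x y

theorem turn_swap (A : Set X) (q x y : X) : S.turn A q y x = -S.turn A q x y :=
  logVar_swap _ _ _ _

theorem turn_pole (h : IsArcBetween A x y) : S.turn A S.pole x y = 0 := by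
  have hlog : IsLogOn (S.disp S.pole) A 0 :=
    ⟨continuousOn_const, fun z _ => by simp [disp_pole]⟩
  rw [turn, hlog.logVar_eq h.isPreconnected h.left_mem h.right_mem]
  simp

theorem exp_turn [T2Space X] (h : IsArcBetween A x y) (hA : S.pole ∉ A) (hq : q ∉ A) :
    Complex.exp (S.turn A q x y) = S.disp q y / S.disp q x := by
  obtain ⟨L, hL⟩ := exists_isLogOn_disp h hA hq
  exact exp_logVar hL h.isPreconnected h.left_mem h.right_mem

theorem continuousAt_turn_of_ne_pole [T2Space X] (h : IsArcBetween A x y) (hA : S.pole ∉ A)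
    (hq : q ∉ A) (hqp : q ≠ S.pole) : ContinuousAt (fun q => S.turn A q x y) q := by
  obtain ⟨L, hL⟩ := exists_isLogOn_disp h hA hq
  refine continuousAt_logVar h.isPreconnected h.isCompact h.left_mem h.right_mem
    (fun z hz => ?_) (.of_forall (continuousOn_disp hA)) hL
  have hdiff : ContinuousAt (fun p : X × X => S.coord p.2 - S.coord p.1) (q, z) :=
    ((S.continuousAt_coord (ne_of_mem_of_not_mem hz hA)).comp continuousAt_snd).sub
      ((S.continuousAt_coord hqp).comp continuousAt_fst)
  refine hdiff.congr ?_
  filter_upwards [continuousAt_fst.eventually_ne hqp] with p hp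
  exact (disp_of_ne_pole hp p.2).symm

variable (S) in
open scoped Classical in
/-- The inverse of the coordinate, extended continuously to the pole. -/
def invCoord (q : X) : ℂ :=
  if q = S.pole then 0 else (S.coord q)⁻¹

theorem continuousAt_invCoord_pole [T2Space X] : ContinuousAt S.invCoord S.pole := by
  have hpole : S.invCoord S.pole = 0 := if_pos rfl
  rw [continuousAt_iff_punctured_nhds, hpole]
  have hinv : Filter.Tendsto (fun q => (S.coord q)⁻¹) (𝓝[≠] S.pole) (𝓝 0) := by
    refine Filter.tendsto_inv₀_cobounded.comp ?_
    rw [Metric.cobounded_eq_cocompact]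
    exact S.tendsto_coord_cocompact
  refine hinv.congr' ?_
  filter_upwards [self_mem_nhdsWithin] with q hq
  exact (if_neg hq).symm

/-- Near the pole, `disp q` is proportional to `1 - coord * invCoord q`, which tends to `1`. -/
theorem continuousAt_turn_pole [T2Space X] (h : IsArcBetween A x y) (hA : S.pole ∉ A) :
    ContinuousAt (fun q => S.turn A q x y) S.pole := by
  let k : X → X → ℂ := fun q z => 1 - S.coord z * S.invCoord q
  have hinv : ∀ z, ContinuousAt (fun p : X × X => S.invCoord p.1) (S.pole, z) := fun z =>
    (continuousAt_invCoord_pole (S := S)).comp (f := Prod.fst) (x := (S.pole, z)) continuousAt_fst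
  have hzA : ∀ z ∈ A, ContinuousAt S.coord z := fun z hz =>
    S.continuousAt_coord (ne_of_mem_of_not_mem hz hA)
  have hlog : IsLogOn (k S.pole) A 0 :=
    ⟨continuousOn_const, fun z _ => by simp [k, invCoord]⟩
  have hcont : ContinuousAt (fun q => logVar A (k q) x y) S.pole := by
    refine continuousAt_logVar h.isPreconnected h.isCompact h.left_mem h.right_mem
      (fun z hz => ?_) (.of_forall fun q z hz => ?_) hlog
    · exact continuousAt_const.sub (((hzA z hz).comp continuousAt_snd).mul (hinv z))
    · exact (continuousAt_const.sub ((hzA z hz).mul continuousAt_const)).continuousWithinAt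
  refine hcont.congr ?_
  have hlarge : ∀ᶠ q in 𝓝[≠] S.pole, S.coord q ≠ 0 :=
    S.tendsto_coord_cocompact.eventually (isCompact_singleton.compl_mem_cocompact)
  have hAc : ∀ᶠ q in 𝓝 S.pole, q ∉ A := h.isClosed.isOpen_compl.mem_nhds hA
  filter_upwards [eventually_nhdsWithin_iff.1 hlarge, hAc] with q hq hqA
  by_cases hqp : q = S.pole
  · rw [hqp, turn_pole h, hlog.logVar_eq h.isPreconnected h.left_mem h.right_mem]
    simp
  · have hscale : k q = fun z => -(S.coord q)⁻¹ * S.disp q z := by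
      ext z
      have hq0 : S.coord q ≠ 0 := hq hqp
      simp only [k, invCoord, if_neg hqp, disp_of_ne_pole hqp]
      field_simp
      ring
    obtain ⟨L, hL⟩ := exists_isLogOn_disp h hA hqA
    rw [hscale, logVar_const_mul hL h.isPreconnected h.left_mem h.right_mem
      (neg_ne_zero.2 (inv_ne_zero (hq hqp))), turn]

theorem continuousAt_turn [T2Space X] (h : IsArcBetween A x y) (hA : S.pole ∉ A)
    (hq : q ∉ A) : ContinuousAt (fun q => S.turn A q x y) q := by
  by_cases hqp : q = S.pole
  · exact hqp ▸ continuousAt_turn_pole h hA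
  · exact continuousAt_turn_of_ne_pole h hA hq hqp

theorem eq_zero_of_isLogOn_zpow_disp_mul_frontier [CompactSpace X] {U : Set X} (hU : IsOpen U)
    (hp : S.pole ∉ closure U) (hq : q ∈ U) {n : ℤ} {g L : X → ℂ}
    (hg : ContinuousOn g (closure U)) (hg0 : ∀ z ∈ closure U, g z ≠ 0)
    (hL : IsLogOn (fun z => S.disp q z ^ n * g z) (frontier U) L) : n = 0 := by
  have hσ : Continuous S.coord.symm := S.continuous_symm
  have hcl : closure (S.coord.symm ⁻¹' U) ⊆ S.coord.symm ⁻¹' closure U :=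
    hσ.closure_preimage_subset U
  have hfr : frontier (S.coord.symm ⁻¹' U) ⊆ S.coord.symm ⁻¹' frontier U :=
    hσ.frontier_preimage_subset U
  have hqp : q ≠ S.pole := ne_of_mem_of_not_mem (subset_closure hq) hp
  have hcoord : ContinuousOn S.coord (closure U) := fun z hz =>
    (S.continuousAt_coord (ne_of_mem_of_not_mem hz hp)).continuousWithinAt
  have hb : Bornology.IsBounded (S.coord.symm ⁻¹' U) :=
    (isClosed_closure.isCompact.image_of_continuousOn hcoord).isBounded.subset fun w hw =>
      ⟨S.coord.symm w, subset_closure hw, S.coord_symm w⟩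
  refine eq_zero_of_isLogOn_zpow_mul_frontier (hU.preimage hσ) hb (c := S.coord q)
    (by rwa [mem_preimage, S.symm_coord hqp]) (g := g ∘ S.coord.symm) (L := L ∘ S.coord.symm)
    (hg.comp hσ.continuousOn hcl) (fun w hw => hg0 _ (hcl hw))
    ⟨hL.1.comp hσ.continuousOn hfr, fun w hw => ?_⟩
  simpa only [Function.comp_apply, disp_of_ne_pole hqp, S.coord_symm] using hL.exp_eq (hfr hw)

theorem mem_connectedComponentIn_pole_of_isLogOn [CompactSpace X] [LocallyConnectedSpace X]
    {K : Set X} (hK : IsClosed K) (hp : S.pole ∉ K) (hq : q ∉ K) {L : X → ℂ}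
    (hL : IsLogOn (S.disp q) K L) : q ∈ connectedComponentIn Kᶜ S.pole := by
  by_contra hqp
  have hpole : S.pole ∉ connectedComponentIn Kᶜ q := fun h =>
    hqp (connectedComponentIn_eq h ▸ mem_connectedComponentIn hq)
  have hcl : S.pole ∉ closure (connectedComponentIn Kᶜ q) := fun h =>
    (closure_connectedComponentIn_compl_subset hK q h).elim hpole hp
  exact one_ne_zero <| eq_zero_of_isLogOn_zpow_disp_mul_frontier
    hK.isOpen_compl.connectedComponentIn hcl (mem_connectedComponentIn hq) (n := 1)
    (g := 1) continuousOn_const (fun _ _ => one_ne_zero)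
    ((hL.mono (frontier_connectedComponentIn_compl_subset hK q)).congr fun z _ => by simp)

/-- On a circle separating `x` from `y` the angle between the directions of `x` and `y`
makes a full turn. -/
theorem not_isLogOn_disp_div (hxy : x ≠ y) (hx : x ≠ S.pole) (hy : y ≠ S.pole) (Φ : X → ℂ) :
    ¬IsLogOn (fun q => S.disp q y / S.disp q x) {x, y}ᶜ Φ := fun hΦ => by
  have hpos : 0 < dist (S.coord y) (S.coord x) := dist_pos.2 (S.coord_ne_coord hy hx hxy.symm)
  let R := dist (S.coord y) (S.coord x) / 2
  have hR : 0 < R := half_pos hpos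
  have hyR : ∀ w ∈ closure (Metric.ball (S.coord x) R), w ≠ S.coord y := by
    rintro w hw rfl
    exact (half_lt_self hpos).not_ge
      (Metric.mem_closedBall.1 (Metric.closure_ball_subset_closedBall hw))
  have hxR : ∀ w ∈ frontier (Metric.ball (S.coord x) R), w ≠ S.coord x := by
    rintro w hw rfl
    rw [Metric.isOpen_ball.frontier_eq] at hw
    exact hw.2 (Metric.mem_ball_self hR)
  have hmaps : MapsTo S.coord.symm (frontier (Metric.ball (S.coord x) R)) {x, y}ᶜ := by
    rintro w hw (h | h)
    · exact hxR w hw (h ▸ (S.coord_symm w).symm)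
    · exact hyR w hw.1 (h ▸ (S.coord_symm w).symm)
  refine neg_ne_zero.2 one_ne_zero (eq_zero_of_isLogOn_zpow_mul_frontier (n := -1)
    (g := fun w => w - S.coord y) (L := Φ ∘ S.coord.symm) Metric.isOpen_ball
    Metric.isBounded_ball (Metric.mem_ball_self hR) (by fun_prop)
    (fun w hw => sub_ne_zero.2 (hyR w hw))
    ⟨hΦ.1.comp S.continuous_symm.continuousOn hmaps, fun w hw => ?_⟩)
  have hexp := hΦ.exp_eq (hmaps hw)
  rw [disp_of_ne_pole (S.symm_ne_pole w), disp_of_ne_pole (S.symm_ne_pole w), S.coord_symm,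
    ← neg_div_neg_eq, neg_sub, neg_sub] at hexp
  rw [Function.comp_apply, Function.comp_apply, hexp]
  simp only [zpow_neg_one, div_eq_inv_mul]

end StereoChart

/-! ### Winding numbers of cycles of arcs -/

/-- A simple closed curve made of `N` arcs: consecutive arcs share one end point, and no other
points are shared. -/
structure ArcCycle (N : ℕ) [NeZero N] (X : Type*) [TopologicalSpace X] where
  /-- the corners -/
  pt : Fin N → X
  /-- the arcs, `arc k` running from `pt k` to `pt (k + 1)` -/
  arc : Fin N → Set X
  isArc : ∀ k, IsArcBetween (arc k) (pt k) (pt (k + 1))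
  meet : ∀ k l, k ≠ l → ∀ z ∈ arc k ∩ arc l, (l = k + 1 ∧ z = pt l) ∨ (k = l + 1 ∧ z = pt k)

namespace ArcCycle

variable {N : ℕ} [NeZero N] {X : Type*} [TopologicalSpace X] (C : ArcCycle N X)
  (S : StereoChart X)

/-- The curve traced by a cycle of arcs, as a set of points. -/
def support : Set X :=
  ⋃ k, C.arc k

/-- `2πi` times the winding number of the cycle around `q`, as seen in the chart `S`. -/
def winding (q : X) : ℂ :=
  ∑ k, S.turn (C.arc k) q (C.pt k) (C.pt (k + 1))

/-- The points off the curve around which the winding lies in `P`. -/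
def region (P : Set ℂ) : Set X :=
  {q | q ∉ C.support ∧ C.winding S q ∈ P}

/-- The points encircled by the cycle. -/
abbrev inner : Set X :=
  C.region S {0}ᶜ

/-- The points off the curve that are not encircled by the cycle. -/
abbrev outer : Set X :=
  C.region S {0}

variable {C S} {q q' : X}

theorem arc_subset_support (k : Fin N) : C.arc k ⊆ C.support :=
  subset_iUnion C.arc k

theorem pt_mem_support (k : Fin N) : C.pt k ∈ C.support :=
  arc_subset_support k (C.isArc k).left_mem

theorem isClosed_support [T2Space X] : IsClosed C.support :=
  isClosed_iUnion_of_finite fun k => (C.isArc k).isClosed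

theorem winding_pole : C.winding S S.pole = 0 :=
  Finset.sum_eq_zero fun k _ => StereoChart.turn_pole (C.isArc k)

theorem pole_mem_outer (hp : S.pole ∉ C.support) : S.pole ∈ C.outer S :=
  ⟨hp, winding_pole⟩

section T2Space

variable [T2Space X]

theorem exp_turn (hp : S.pole ∉ C.support) {k : Fin N} (hq : q ∉ C.arc k) :
    Complex.exp (S.turn (C.arc k) q (C.pt k) (C.pt (k + 1))) =
      S.disp q (C.pt (k + 1)) / S.disp q (C.pt k) :=
  StereoChart.exp_turn (C.isArc k) (fun h => hp (arc_subset_support k h)) hq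

theorem continuousAt_turn (hp : S.pole ∉ C.support) {k : Fin N} (hq : q ∉ C.arc k) :
    ContinuousAt (fun q => S.turn (C.arc k) q (C.pt k) (C.pt (k + 1))) q :=
  StereoChart.continuousAt_turn (C.isArc k) (fun h => hp (arc_subset_support k h)) hq

omit [T2Space X] in
theorem disp_pt_ne_zero (hp : S.pole ∉ C.support) {k : Fin N} (hq : q ≠ C.pt k) :
    S.disp q (C.pt k) ≠ 0 :=
  StereoChart.disp_ne_zero hq (ne_of_mem_of_not_mem (pt_mem_support k) hp)

omit [T2Space X] in
theorem prod_disp_div_disp (hp : S.pole ∉ C.support) (hq : ∀ k, q ≠ C.pt k) :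
    ∏ k, S.disp q (C.pt (k + 1)) / S.disp q (C.pt k) = 1 := by
  rw [Finset.prod_div_distrib]
  have hshift := Equiv.prod_comp (Equiv.addRight (1 : Fin N)) fun k => S.disp q (C.pt k)
  simp only [Equiv.coe_addRight] at hshift
  rw [hshift]
  exact div_self (Finset.prod_ne_zero_iff.2 fun k _ => disp_pt_ne_zero hp (hq k))

theorem exp_winding (hp : S.pole ∉ C.support) (hq : q ∉ C.support) :
    Complex.exp (C.winding S q) = 1 := by
  rw [winding, Complex.exp_sum, ← prod_disp_div_disp hp fun k =>
    (ne_of_mem_of_not_mem (pt_mem_support k) hq).symm]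
  exact Finset.prod_congr rfl fun k _ => exp_turn hp fun h => hq (arc_subset_support k h)

theorem continuousAt_winding (hp : S.pole ∉ C.support) (hq : q ∉ C.support) :
    ContinuousAt (C.winding S) q :=
  tendsto_finsetSum _ fun k _ => continuousAt_turn hp fun h => hq (arc_subset_support k h)

theorem winding_eq_of_mem_connectedComponentIn (hp : S.pole ∉ C.support)
    (h : q' ∈ connectedComponentIn C.supportᶜ q) : C.winding S q' = C.winding S q := by
  have hq : q ∈ C.supportᶜ := connectedComponentIn_nonempty_iff.1 ⟨q', h⟩
  have hsub := connectedComponentIn_subset C.supportᶜ q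
  exact eq_of_exp_comp_eq_one isPreconnected_connectedComponentIn
    (fun z hz => (continuousAt_winding hp (hsub hz)).continuousWithinAt)
    (fun z hz => exp_winding hp (hsub hz)) h (mem_connectedComponentIn hq)

theorem exists_forall_isLogOn_disp (hp : S.pole ∉ C.support) (hq : q ∉ C.support) :
    ∃ L : Fin N → X → ℂ, ∀ k, IsLogOn (S.disp q) (C.arc k) (L k) ∧
      S.turn (C.arc k) q (C.pt k) (C.pt (k + 1)) = L k (C.pt (k + 1)) - L k (C.pt k) := by
  have hlog : ∀ k, ∃ L, IsLogOn (S.disp q) (C.arc k) L := fun k =>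
    StereoChart.exists_isLogOn_disp (C.isArc k) (fun h => hp (arc_subset_support k h))
      fun h => hq (arc_subset_support k h)
  choose L hL using hlog
  exact ⟨L, fun k => ⟨hL k, (hL k).logVar_eq (C.isArc k).isPreconnected (C.isArc k).left_mem
    (C.isArc k).right_mem⟩⟩

theorem exists_isLogOn_zpow_disp_mul_zpow_disp (hp : S.pole ∉ C.support) (hq : q ∉ C.support)
    (hq' : q' ∉ C.support) {a b : ℤ} (hab : a * C.winding S q + b * C.winding S q' = 0) :
    ∃ M, IsLogOn (fun z => S.disp q z ^ a * S.disp q' z ^ b) C.support M := by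
  obtain ⟨L, hL⟩ := exists_forall_isLogOn_disp hp hq
  obtain ⟨L', hL'⟩ := exists_forall_isLogOn_disp hp hq'
  refine IsLogOn.exists_iUnion_cycle (fun k => (C.isArc k).isClosed)
    (fun k => (C.isArc k).left_mem) (fun k => (C.isArc k).right_mem) C.meet
    (fun k => ((hL k).1.zpow a).mul ((hL' k).1.zpow b)) ?_
  rw [winding, winding, Finset.mul_sum, Finset.mul_sum, ← Finset.sum_add_distrib] at hab
  rw [← hab]
  exact Finset.sum_congr rfl fun k _ => by rw [(hL k).2, (hL' k).2]; ring

omit [T2Space X] in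
theorem exists_pt_mem_arc_ne (C : ArcCycle N X) (k l : Fin N) : ∃ m, m ≠ l ∧ C.pt k ∈ C.arc m := by
  by_cases hkl : k = l
  · refine ⟨k - 1, fun h => (C.isArc k).ne ?_, ?_⟩
    · rw [sub_eq_self.1 (h.trans hkl.symm), add_zero]
    · simpa using (C.isArc (k - 1)).right_mem
  · exact ⟨k, hkl, (C.isArc k).left_mem⟩

theorem isLogOn_neg_sum_turn (hp : S.pole ∉ C.support) (i : Fin N) :
    IsLogOn (fun q => S.disp q (C.pt (i + 1)) / S.disp q (C.pt i))
      (⋃ k ∈ ({i}ᶜ : Set (Fin N)), C.arc k)ᶜ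
      fun q => -∑ k ∈ {i}ᶜ, S.turn (C.arc k) q (C.pt k) (C.pt (k + 1)) := by
  have harc : ∀ {q k}, q ∈ (⋃ k ∈ ({i}ᶜ : Set (Fin N)), C.arc k)ᶜ → k ≠ i → q ∉ C.arc k :=
    fun hq hk h => hq (mem_biUnion hk h)
  refine ⟨fun q hq => (tendsto_finsetSum _ fun k hk => continuousAt_turn hp
    (harc hq (by simpa using hk))).neg.mono_left nhdsWithin_le_nhds, fun q hq => ?_⟩
  let ρ : Fin N → ℂ := fun k => S.disp q (C.pt (k + 1)) / S.disp q (C.pt k)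
  have hexp : Complex.exp (∑ k ∈ {i}ᶜ, S.turn (C.arc k) q (C.pt k) (C.pt (k + 1))) =
      ∏ k ∈ {i}ᶜ, ρ k := by
    rw [Complex.exp_sum]
    exact Finset.prod_congr rfl fun k hk => exp_turn hp (harc hq (by simpa using hk))
  have hone : ρ i * ∏ k ∈ {i}ᶜ, ρ k = 1 := by
    rw [← Fintype.prod_eq_mul_prod_compl i ρ]
    refine prod_disp_div_disp hp fun k hk => ?_
    obtain ⟨m, hm, hkm⟩ := C.exists_pt_mem_arc_ne k i
    exact harc hq hm (hk ▸ hkm)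
  rw [Function.comp_apply, Complex.exp_neg, hexp]
  exact (eq_inv_of_mul_eq_one_left hone).symm

/-- If the cycle encircled nothing, the angle of one arc and the opposite of the angle of all
others would agree and make up a logarithm defined off the common end points. -/
theorem inner_nonempty (hp : S.pole ∉ C.support) : (C.inner S).Nonempty := by
  by_contra hempty
  let R : Set X := ⋃ k ∈ ({0}ᶜ : Set (Fin N)), C.arc k
  have hR : IsClosed R := (toFinite _).isClosed_biUnion fun k _ => (C.isArc k).isClosed
  have hlog : IsLogOn (fun q => S.disp q (C.pt (0 + 1)) / S.disp q (C.pt 0)) (C.arc 0)ᶜ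
      fun q => S.turn (C.arc 0) q (C.pt 0) (C.pt (0 + 1)) :=
    ⟨fun q hq => (continuousAt_turn hp hq).continuousWithinAt, fun q hq => exp_turn hp hq⟩
  obtain ⟨M, hM⟩ := hlog.exists_union_of_isOpen (isLogOn_neg_sum_turn hp 0)
    (C.isArc 0).isClosed.isOpen_compl hR.isOpen_compl fun q hq => by
      by_contra hne
      refine hempty ⟨q, fun hqC => ?_, fun hw => hne ?_⟩
      · obtain ⟨k, hk⟩ := mem_iUnion.1 hqC
        by_cases hk0 : k = 0
        · exact hq.1 (hk0 ▸ hk)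
        · exact hq.2 (mem_biUnion hk0 hk)
      · rw [winding, Fintype.sum_eq_add_sum_compl 0] at hw
        exact eq_neg_of_add_eq_zero_left hw
  refine StereoChart.not_isLogOn_disp_div (C.isArc 0).ne
    (ne_of_mem_of_not_mem (pt_mem_support 0) hp) (ne_of_mem_of_not_mem (pt_mem_support _) hp) M
    (hM.mono ?_)
  rw [← compl_inter, compl_subset_compl]
  rintro z ⟨hz, hzR⟩
  obtain ⟨k, hk, hzk⟩ := mem_iUnion₂.1 hzR
  rcases C.meet 0 k (Ne.symm hk) z ⟨hz, hzk⟩ with ⟨rfl, h⟩ | ⟨-, h⟩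
  · exact Or.inr h
  · exact Or.inl h

theorem winding_eq_zero_iff [CompactSpace X] [LocallyConnectedSpace X]
    (hp : S.pole ∉ C.support) (hq : q ∉ C.support) :
    C.winding S q = 0 ↔ q ∈ connectedComponentIn C.supportᶜ S.pole := by
  refine ⟨fun h => ?_, fun h => by rw [winding_eq_of_mem_connectedComponentIn hp h, winding_pole]⟩
  obtain ⟨M, hM⟩ := exists_isLogOn_zpow_disp_mul_zpow_disp hp hq hq (a := 1) (b := 0) (by simp [h])
  exact StereoChart.mem_connectedComponentIn_pole_of_isLogOn isClosed_support hp hq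
    (hM.congr fun z _ => by simp)

theorem mem_connectedComponentIn_of_mem_inner [CompactSpace X] [LocallyConnectedSpace X]
    (hp : S.pole ∉ C.support) (hq : q ∈ C.inner S) (hq' : q' ∈ C.inner S) :
    q' ∈ connectedComponentIn C.supportᶜ q := by
  by_contra hqq'
  have hK : IsClosed C.support := isClosed_support
  obtain ⟨m, hm⟩ := Complex.exp_eq_one_iff.1 (exp_winding hp hq.1)
  obtain ⟨m', hm'⟩ := Complex.exp_eq_one_iff.1 (exp_winding hp hq'.1)
  have hpole : S.pole ∉ connectedComponentIn C.supportᶜ q := fun h =>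
    hq.2 ((winding_eq_of_mem_connectedComponentIn hp h).symm.trans winding_pole)
  have hcl := closure_connectedComponentIn_compl_subset hK q
  have hpcl : S.pole ∉ closure (connectedComponentIn C.supportᶜ q) := fun h =>
    (hcl h).elim hpole hp
  have hne : ∀ z ∈ closure (connectedComponentIn C.supportᶜ q), S.disp q' z ≠ 0 := fun z hz =>
    StereoChart.disp_ne_zero (fun h => (hcl (h ▸ hz)).elim hqq' hq'.1)
      (ne_of_mem_of_not_mem hz hpcl)
  obtain ⟨M, hM⟩ := exists_isLogOn_zpow_disp_mul_zpow_disp hp hq.1 hq'.1 (a := m') (b := -m)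
    (by rw [hm, hm']; push_cast; ring)
  have hm'0 : m' = 0 := StereoChart.eq_zero_of_isLogOn_zpow_disp_mul_frontier
    hK.isOpen_compl.connectedComponentIn hpcl (mem_connectedComponentIn hq.1)
    ((StereoChart.continuousOn_disp hpcl q').zpow₀ (-m) fun z hz => Or.inl (hne z hz))
    (fun z hz => zpow_ne_zero _ (hne z hz))
    (hM.mono (frontier_connectedComponentIn_compl_subset hK q))
  exact hq'.2 (by simp [hm', hm'0])

theorem winding_eq_of_mem_inner [CompactSpace X] [LocallyConnectedSpace X]
    (hp : S.pole ∉ C.support) (hq : q ∈ C.inner S) (hq' : q' ∈ C.inner S) :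
    C.winding S q' = C.winding S q :=
  winding_eq_of_mem_connectedComponentIn hp (mem_connectedComponentIn_of_mem_inner hp hq hq')

theorem isOpen_region [LocallyConnectedSpace X] (hp : S.pole ∉ C.support) (P : Set ℂ) :
    IsOpen (C.region S P) := by
  refine isOpen_iff_mem_nhds.2 fun q hq => ?_
  filter_upwards [isClosed_support.isOpen_compl.connectedComponentIn.mem_nhds
    (mem_connectedComponentIn hq.1)] with z hz
  exact ⟨connectedComponentIn_subset _ _ hz,
    (winding_eq_of_mem_connectedComponentIn hp hz).symm ▸ hq.2⟩

theorem closure_region_subset [LocallyConnectedSpace X] (hp : S.pole ∉ C.support) (P : Set ℂ) :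
    closure (C.region S P) ⊆ C.region S P ∪ C.support := by
  refine fun q hq => or_iff_not_imp_right.2 fun hqC => ?_
  by_contra hqP
  obtain ⟨z, hz, hz'⟩ := mem_closure_iff.1 hq _ (isOpen_region hp Pᶜ) ⟨hqC, fun h => hqP ⟨hqC, h⟩⟩
  exact hz.2 hz'.2

/-- Once the curve is cut open, the missing piece of arc absorbs any jump of the logarithm. -/
theorem exists_isLogOn_disp_diff (hp : S.pole ∉ C.support) (hq : q ∉ C.support) {p : X}
    (hpC : p ∈ C.support) {V : Set X} (hV : IsOpen V) (hpV : p ∈ V) (hpt : ∀ k, C.pt k ∉ V) :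
    ∃ M, IsLogOn (S.disp q) (C.support \ V) M := by
  classical
  obtain ⟨k, hpk⟩ := mem_iUnion.1 hpC
  obtain ⟨L, hL⟩ := exists_forall_isLogOn_disp hp hq
  have hexp : Complex.exp (-C.winding S q) = 1 := by
    rw [Complex.exp_neg, exp_winding hp hq, inv_one]
  obtain ⟨L', hL', hL'₁, hL'₂⟩ :=
    (C.isArc k).exists_isLogOn_diff (hL k).1 hpk hV hpV (hpt _) hexp
  have hcut : ∀ l, IsLogOn (S.disp q) (C.arc l \ V) (Function.update L k L' l) := fun l => by
    rcases eq_or_ne l k with rfl | hl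
    · rwa [Function.update_self]
    · rw [Function.update_of_ne hl]
      exact (hL l).1.mono sdiff_subset
  have hvar : ∀ l, Function.update L k L' l (C.pt (l + 1)) - Function.update L k L' l (C.pt l) =
      S.turn (C.arc l) q (C.pt l) (C.pt (l + 1)) + if l = k then -C.winding S q else 0 :=
    fun l => by
      rw [(hL l).2]
      rcases eq_or_ne l k with rfl | hl
      · rw [Function.update_self, hL'₁, hL'₂, if_pos rfl]
        ring
      · rw [Function.update_of_ne hl, if_neg hl, add_zero]
  rw [support, iUnion_sdiff]
  refine IsLogOn.exists_iUnion_cycle (fun l => (C.isArc l).isClosed.sdiff hV)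
    (fun l => ⟨(C.isArc l).left_mem, hpt l⟩) (fun l => ⟨(C.isArc l).right_mem, hpt _⟩)
    (fun l m hlm z hz => C.meet l m hlm z ⟨hz.1.1, hz.2.1⟩) hcut ?_
  simp only [hvar, Finset.sum_add_distrib, Finset.sum_ite_eq', Finset.mem_univ, if_true, winding,
    add_neg_cancel]

theorem compl_support_subset_connectedComponentIn [CompactSpace X] [LocallyConnectedSpace X]
    (hp : S.pole ∉ C.support) {p : X} (hpC : p ∈ C.support) {V : Set X} (hV : IsOpen V)
    (hpV : p ∈ V) (hpt : ∀ k, C.pt k ∉ V) :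
    C.supportᶜ ⊆ connectedComponentIn (C.support \ V)ᶜ S.pole := fun q hq => by
  obtain ⟨M, hM⟩ := exists_isLogOn_disp_diff hp hq hpC hV hpV hpt
  exact StereoChart.mem_connectedComponentIn_pole_of_isLogOn (isClosed_support.sdiff hV)
    (fun h => hp h.1) (fun h => hq h.1) hM

omit [T2Space X] in
theorem support_subset_closure_diff : C.support ⊆ closure (C.support \ range C.pt) := by
  refine iUnion_subset fun k => (C.isArc k).subset_closure_diff.trans (closure_mono ?_)
  rintro z ⟨hz, hzk⟩
  refine ⟨arc_subset_support k hz, ?_⟩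
  rintro ⟨l, rfl⟩
  rcases eq_or_ne k l with rfl | hkl
  · exact hzk (Or.inl rfl)
  · rcases C.meet k l hkl _ ⟨hz, (C.isArc l).left_mem⟩ with ⟨rfl, -⟩ | ⟨-, h⟩
    · exact hzk (Or.inr rfl)
    · exact hzk (Or.inl h)

theorem support_subset_closure_region [CompactSpace X] [LocallyConnectedSpace X]
    (hp : S.pole ∉ C.support) {P : Set ℂ} (hP : (C.region S P).Nonempty)
    (hP' : (C.region S Pᶜ).Nonempty) : C.support ⊆ closure (C.region S P) := by
  refine support_subset_closure_diff.trans (closure_minimal (fun p hpC => ?_) isClosed_closure)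
  refine mem_closure_iff.2 fun V₀ hV₀ hpV₀ => ?_
  by_contra hmeet
  let V : Set X := V₀ \ range C.pt
  have hV : IsOpen V := hV₀.sdiff (finite_range C.pt).isClosed
  have hsub := compl_support_subset_connectedComponentIn hp hpC.1 hV ⟨hpV₀, hpC.2⟩
    fun k hk => hk.2 (mem_range_self k)
  obtain ⟨q, hq⟩ := hP
  obtain ⟨q', hq'⟩ := hP'
  have hall := isPreconnected_connectedComponentIn.subset_of_closure_inter_subset
    (isOpen_region hp P) ⟨q, hsub hq.1, hq⟩ fun z hz => by
      refine (closure_region_subset hp P hz.1).resolve_right fun hzC => ?_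
      have hzV : z ∈ V := by
        by_contra hzV
        exact connectedComponentIn_subset _ _ hz.2 ⟨hzC, hzV⟩
      obtain ⟨r, hrV, hr⟩ := mem_closure_iff.1 hz.1 V hV hzV
      exact hmeet ⟨r, hrV.1, hr⟩
  exact hq'.2 (hall (hsub hq'.1)).2

end T2Space

end ArcCycle

/-! ### Triangles of a good drawing -/

namespace GoodDrawing

variable {n : ℕ} {X : Type*} [TopologicalSpace X] {D : GoodDrawing n X} {S : StereoChart X}
  {a b c d : Fin n} {p q q' z : X}

theorem isArcBetween_arc (h : a ≠ b) : IsArcBetween (D.arc a b) (D.vtx a) (D.vtx b) :=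
  D.isArc a b h

theorem arc_subset_image {W : Set (Fin n)} (ha : a ∈ W) (hb : b ∈ W) (hab : a ≠ b) :
    D.arc a b ⊆ D.image W := fun _ hz =>
  Or.inr (mem_iUnion₂.2 ⟨a, ha, mem_iUnion₂.2 ⟨b, hb, mem_iUnion.2 ⟨hab, hz⟩⟩⟩)

theorem tri_subset_image {W : Set (Fin n)} (ha : a ∈ W) (hb : b ∈ W) (hc : c ∈ W)
    (h : [a, b, c].Nodup) : D.tri a b c ⊆ D.image W :=
  union_subset (union_subset (arc_subset_image ha hb (by grind))
    (arc_subset_image hb hc (by grind))) (arc_subset_image ha hc (by grind))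

theorem eq_vtx_of_mem_arc_of_mem_arc (h : [a, b, c].Nodup) (hab : z ∈ D.arc a b)
    (hbc : z ∈ D.arc b c) : z = D.vtx b := by
  have hz : z ∈ D.arc b a ∩ D.arc b c := ⟨D.arc_symm a b ▸ hab, hbc⟩
  rwa [D.adj_arcs b a c (by grind) (by grind) (by grind)] at hz

theorem tri_rotate (D : GoodDrawing n X) (a b c : Fin n) : D.tri b c a = D.tri a b c := by
  simp only [tri, D.arc_symm c a, D.arc_symm b a]
  ac_rfl

theorem tri_swap (D : GoodDrawing n X) (a b c : Fin n) : D.tri b a c = D.tri a b c := by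
  simp only [tri, D.arc_symm b a]
  ac_rfl

theorem arc_subset_tri : D.arc a b ⊆ D.tri a b c :=
  subset_union_left.trans subset_union_left

theorem vtx_notMem_tri (h : [a, b, c, d].Nodup) : D.vtx d ∉ D.tri a b c := by
  rintro ((hd | hd) | hd)
  · exact D.vtx_not_mem a b d (by grind) (by grind) (by grind) hd
  · exact D.vtx_not_mem b c d (by grind) (by grind) (by grind) hd
  · exact D.vtx_not_mem a c d (by grind) (by grind) (by grind) hd

theorem nodup_consecutive {m : ℕ} {c : Fin (m + 3) → Fin n} (hc : Function.Injective c)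
    (k : Fin (m + 3)) : [c k, c (k + 1), c (k + 1 + 1)].Nodup := by
  have htwo : (1 + 1 : Fin (m + 3)) ≠ 0 := by
    simp [Fin.ext_iff, Fin.val_add, Nat.mod_eq_of_lt (show 2 < m + 3 by omega)]
  simpa [hc.eq_iff, add_assoc] using htwo

/-- The closed curve through the vertices `c 0, c 1, …`, provided it does not cross itself. -/
def polygon (D : GoodDrawing n X) {m : ℕ} (c : Fin (m + 3) → Fin n) (hc : Function.Injective c)
    (hdisj : ∀ k l, k ≠ l → l ≠ k + 1 → k ≠ l + 1 →
      Disjoint (D.arc (c k) (c (k + 1))) (D.arc (c l) (c (l + 1)))) : ArcCycle (m + 3) X where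
  pt k := D.vtx (c k)
  arc k := D.arc (c k) (c (k + 1))
  isArc k := isArcBetween_arc (hc.ne (by simp))
  meet k l hkl z hz := by
    rcases eq_or_ne l (k + 1) with rfl | hl
    · exact Or.inl ⟨rfl, eq_vtx_of_mem_arc_of_mem_arc (nodup_consecutive hc k) hz.1 hz.2⟩
    rcases eq_or_ne k (l + 1) with rfl | hk
    · exact Or.inr ⟨rfl, eq_vtx_of_mem_arc_of_mem_arc (nodup_consecutive hc l) hz.2 hz.1⟩
    exact (disjoint_left.1 (hdisj k l hkl hl hk) hz.1 hz.2).elim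

/-- The cycle of arcs drawing the 3-cycle `a`, `b`, `c`. -/
def triangle (D : GoodDrawing n X) (a b c : Fin n) (h : [a, b, c].Nodup) : ArcCycle 3 X :=
  D.polygon (m := 0) ![a, b, c] (List.nodup_ofFn.1 h) fun k l hkl hl hk =>
    absurd ((by decide : ∀ k l : Fin 3, k ≠ l → l ≠ k + 1 → k = l + 1) k l hkl hl) hk

theorem support_triangle (h : [a, b, c].Nodup) : (D.triangle a b c h).support = D.tri a b c := by
  rw [tri, D.arc_symm a c]
  ext z
  simp [ArcCycle.support, triangle, polygon, Fin.exists_fin_succ, or_assoc]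

/-- The turn of the vector from `q` to a point running along the arc from `a` to `b`. -/
def edgeTurn (D : GoodDrawing n X) (S : StereoChart X) (a b : Fin n) (q : X) : ℂ :=
  S.turn (D.arc a b) q (D.vtx a) (D.vtx b)

/-- `2πi` times the winding number of the triangle `a b c` around `q`; it vanishes when the
three vertices are not distinct. -/
def triWinding (D : GoodDrawing n X) (S : StereoChart X) (a b c : Fin n) (q : X) : ℂ :=
  D.edgeTurn S a b q + D.edgeTurn S b c q + D.edgeTurn S c a q

/-- The points encircled by the triangle `a b c`. -/
def triInner (D : GoodDrawing n X) (S : StereoChart X) (a b c : Fin n) : Set X :=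
  {q | q ∉ D.tri a b c ∧ D.triWinding S a b c q ≠ 0}

/-- The points off the triangle `a b c` that are not encircled by it. -/
def triOuter (D : GoodDrawing n X) (S : StereoChart X) (a b c : Fin n) : Set X :=
  {q | q ∉ D.tri a b c ∧ D.triWinding S a b c q = 0}

open scoped Classical in
/-- `2πi` times the sense of rotation of the triangle `a b c`: the winding around any point
encircled by it. It is `0` when the vertices are not distinct. -/
def orient (D : GoodDrawing n X) (S : StereoChart X) (a b c : Fin n) : ℂ :=
  if h : (D.triInner S a b c).Nonempty then D.triWinding S a b c h.some else 0

theorem winding_triangle (h : [a, b, c].Nodup) :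
    (D.triangle a b c h).winding S q = D.triWinding S a b c q := by
  simp [ArcCycle.winding, Fin.sum_univ_three, triangle, polygon, triWinding, edgeTurn]

theorem inner_triangle (h : [a, b, c].Nodup) :
    (D.triangle a b c h).inner S = D.triInner S a b c := by
  ext q
  simp [ArcCycle.region, triInner, support_triangle, winding_triangle]

theorem outer_triangle (h : [a, b, c].Nodup) :
    (D.triangle a b c h).outer S = D.triOuter S a b c := by
  ext q
  simp [ArcCycle.region, triOuter, support_triangle, winding_triangle]

theorem edgeTurn_swap (a b : Fin n) (q : X) : D.edgeTurn S b a q = -D.edgeTurn S a b q := by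
  rw [edgeTurn, D.arc_symm b a, StereoChart.turn_swap, edgeTurn]

theorem edgeTurn_self (a : Fin n) (q : X) : D.edgeTurn S a a q = 0 :=
  self_eq_neg.1 (edgeTurn_swap a a q)

theorem triWinding_rotate (a b c : Fin n) (q : X) :
    D.triWinding S b c a q = D.triWinding S a b c q := by
  rw [triWinding, triWinding]
  ring

theorem triWinding_swap (a b c : Fin n) (q : X) :
    D.triWinding S b a c q = -D.triWinding S a b c q := by
  rw [triWinding, triWinding, edgeTurn_swap a b, edgeTurn_swap c a, edgeTurn_swap b c]
  ring

theorem triWinding_add_triWinding_add_triWinding (a b c d : Fin n) (q : X) :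
    D.triWinding S a b d q + D.triWinding S b c d q + D.triWinding S c a d q =
      D.triWinding S a b c q := by
  simp only [triWinding, edgeTurn_swap a d, edgeTurn_swap b d, edgeTurn_swap c d]
  ring

theorem nodup_of_triWinding_ne_zero (h : D.triWinding S a b c q ≠ 0) : [a, b, c].Nodup := by
  by_contra hnd
  refine h ?_
  have hdeg : a = b ∨ b = c ∨ c = a := by grind
  rcases hdeg with rfl | rfl | rfl
  · rw [triWinding, edgeTurn_self, edgeTurn_swap]
    ring
  · rw [triWinding, edgeTurn_self, edgeTurn_swap]
    ring
  · rw [triWinding, edgeTurn_self, edgeTurn_swap]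
    ring

theorem nodup_of_vtx_mem_triInner (h : D.vtx d ∈ D.triInner S a b c) : [a, b, c, d].Nodup := by
  have habc := nodup_of_triWinding_ne_zero h.2
  have hda : d ≠ a := by
    rintro rfl
    exact h.1 (arc_subset_tri (isArcBetween_arc (by grind)).left_mem)
  have hdb : d ≠ b := by
    rintro rfl
    exact h.1 (arc_subset_tri (isArcBetween_arc (by grind)).right_mem)
  have hdc : d ≠ c := by
    rintro rfl
    exact h.1 (Or.inr (isArcBetween_arc (by grind)).right_mem)
  grind

theorem triInner_rotate (D : GoodDrawing n X) (S : StereoChart X) (a b c : Fin n) :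
    D.triInner S b c a = D.triInner S a b c := by
  simp only [triInner, tri_rotate D a b c, triWinding_rotate a b c]

theorem triInner_swap (D : GoodDrawing n X) (S : StereoChart X) (a b c : Fin n) :
    D.triInner S b a c = D.triInner S a b c := by
  simp only [triInner, tri_swap D a b c, triWinding_swap a b c, neg_ne_zero]

theorem triInner_swap_right (D : GoodDrawing n X) (S : StereoChart X) (a b c : Fin n) :
    D.triInner S a c b = D.triInner S a b c := by
  rw [← triInner_rotate, triInner_swap, triInner_rotate]

theorem triOuter_rotate (D : GoodDrawing n X) (S : StereoChart X) (a b c : Fin n) :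
    D.triOuter S b c a = D.triOuter S a b c := by
  simp only [triOuter, tri_rotate D a b c, triWinding_rotate a b c]

theorem orient_rotate (D : GoodDrawing n X) (S : StereoChart X) (a b c : Fin n) :
    D.orient S b c a = D.orient S a b c := by
  unfold orient
  rw! [triInner_rotate D S a b c]
  simp only [triWinding_rotate a b c]

theorem orient_swap (D : GoodDrawing n X) (S : StereoChart X) (a b c : Fin n) :
    D.orient S b a c = -D.orient S a b c := by
  unfold orient
  rw! [triInner_swap D S a b c]
  split_ifs <;> simp [triWinding_swap a b c]

theorem pole_notMem_arc (hS : S.pole ∉ D.image univ) (hab : a ≠ b) : S.pole ∉ D.arc a b :=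
  fun h => hS (arc_subset_image (mem_univ a) (mem_univ b) hab h)

theorem pole_notMem_support_triangle (hS : S.pole ∉ D.image univ) (h : [a, b, c].Nodup) :
    S.pole ∉ (D.triangle a b c h).support := by
  rw [support_triangle]
  exact fun hp => hS (tri_subset_image (mem_univ a) (mem_univ b) (mem_univ c) h hp)

theorem pole_mem_triOuter (hS : S.pole ∉ D.image univ) (h : [a, b, c].Nodup) :
    S.pole ∈ D.triOuter S a b c := by
  rw [← outer_triangle h]
  exact ArcCycle.pole_mem_outer (pole_notMem_support_triangle hS h)

section T2Space

variable [T2Space X]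

theorem isClosed_arc (hab : a ≠ b) : IsClosed (D.arc a b) :=
  (isArcBetween_arc hab).isClosed

theorem triInner_nonempty (hS : S.pole ∉ D.image univ) (h : [a, b, c].Nodup) :
    (D.triInner S a b c).Nonempty := by
  rw [← inner_triangle h]
  exact ArcCycle.inner_nonempty (pole_notMem_support_triangle hS h)

theorem orient_ne_zero (hS : S.pole ∉ D.image univ) (h : [a, b, c].Nodup) :
    D.orient S a b c ≠ 0 := by
  rw [orient, dif_pos (triInner_nonempty hS h)]
  exact (triInner_nonempty hS h).some_mem.2

theorem isOpen_triOuter [LocallyConnectedSpace X] (hS : S.pole ∉ D.image univ)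
    (h : [a, b, c].Nodup) : IsOpen (D.triOuter S a b c) := by
  rw [← outer_triangle h]
  exact ArcCycle.isOpen_region (pole_notMem_support_triangle hS h) _

theorem closure_triOuter_subset [LocallyConnectedSpace X] (hS : S.pole ∉ D.image univ)
    (h : [a, b, c].Nodup) : closure (D.triOuter S a b c) ⊆ D.triOuter S a b c ∪ D.tri a b c := by
  rw [← outer_triangle h, ← support_triangle h]
  exact ArcCycle.closure_region_subset (pole_notMem_support_triangle hS h) _

section CompactSpace

variable [CompactSpace X] [LocallyConnectedSpace X]

theorem triWinding_eq_of_mem_triInner (hS : S.pole ∉ D.image univ)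
    (hq : q ∈ D.triInner S a b c) (hq' : q' ∈ D.triInner S a b c) :
    D.triWinding S a b c q' = D.triWinding S a b c q := by
  have h := nodup_of_triWinding_ne_zero hq.2
  rw [← inner_triangle h] at hq hq'
  rw [← winding_triangle h, ← winding_triangle h]
  exact ArcCycle.winding_eq_of_mem_inner (pole_notMem_support_triangle hS h) hq hq'

theorem triWinding_eq_orient (hS : S.pole ∉ D.image univ) (hq : q ∈ D.triInner S a b c) :
    D.triWinding S a b c q = D.orient S a b c := by
  have hne : (D.triInner S a b c).Nonempty := ⟨q, hq⟩
  rw [orient, dif_pos hne]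
  exact triWinding_eq_of_mem_triInner hS hne.some_mem hq

theorem triWinding_eq_zero_or_eq_orient (hS : S.pole ∉ D.image univ) (hq : q ∉ D.tri a b c) :
    D.triWinding S a b c q = 0 ∨ D.triWinding S a b c q = D.orient S a b c :=
  or_iff_not_imp_left.2 fun h => triWinding_eq_orient hS ⟨hq, h⟩

theorem triOuter_eq_connectedComponentIn (hS : S.pole ∉ D.image univ) (h : [a, b, c].Nodup) :
    D.triOuter S a b c = connectedComponentIn (D.tri a b c)ᶜ S.pole := by
  have hp := pole_notMem_support_triangle hS h
  rw [← outer_triangle h, ← support_triangle h]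
  ext q
  refine ⟨fun hq => (ArcCycle.winding_eq_zero_iff hp hq.1).1 hq.2, fun hq => ?_⟩
  have hqC := connectedComponentIn_subset _ _ hq
  exact ⟨hqC, (ArcCycle.winding_eq_zero_iff hp hqC).2 hq⟩

theorem subset_triOuter (hS : S.pole ∉ D.image univ) (h : [a, b, c].Nodup) {G : Set X}
    (hG : IsPreconnected G) (hGt : Disjoint G (D.tri a b c)) (hq : q ∈ D.triOuter S a b c)
    (hqG : q ∈ G) : G ⊆ D.triOuter S a b c := by
  rw [triOuter_eq_connectedComponentIn hS h] at hq ⊢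
  rw [connectedComponentIn_eq hq]
  exact hG.subset_connectedComponentIn hqG hGt.subset_compl_right

theorem triInner_eq_connectedComponentIn (hS : S.pole ∉ D.image univ)
    (hq : q ∈ D.triInner S a b c) :
    D.triInner S a b c = connectedComponentIn (D.tri a b c)ᶜ q := by
  have h := nodup_of_triWinding_ne_zero hq.2
  have hp := pole_notMem_support_triangle hS h
  rw [← inner_triangle h] at hq ⊢
  rw [← support_triangle h]
  refine Subset.antisymm
    (fun z hz => ArcCycle.mem_connectedComponentIn_of_mem_inner hp hq hz)
    fun z hz => ⟨connectedComponentIn_subset _ _ hz, ?_⟩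
  rw [ArcCycle.winding_eq_of_mem_connectedComponentIn hp hz]
  exact hq.2

theorem tri_subset_closure_triInner (hS : S.pole ∉ D.image univ) (h : [a, b, c].Nodup) :
    D.tri a b c ⊆ closure (D.triInner S a b c) := by
  have hp := pole_notMem_support_triangle hS h
  rw [← inner_triangle h, ← support_triangle h]
  refine ArcCycle.support_subset_closure_region hp (ArcCycle.inner_nonempty hp) ?_
  rw [compl_compl]
  exact ⟨_, ArcCycle.pole_mem_outer hp⟩

theorem tri_subset_closure_triOuter (hS : S.pole ∉ D.image univ) (h : [a, b, c].Nodup) :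
    D.tri a b c ⊆ closure (D.triOuter S a b c) := by
  have hp := pole_notMem_support_triangle hS h
  rw [← outer_triangle h, ← support_triangle h]
  exact ArcCycle.support_subset_closure_region hp ⟨_, ArcCycle.pole_mem_outer hp⟩
    (ArcCycle.inner_nonempty hp)

end CompactSpace

/-! ### Two triangles with a common edge -/

theorem continuousAt_edgeTurn (hS : S.pole ∉ D.image univ) (hab : a ≠ b) (hq : q ∉ D.arc a b) :
    ContinuousAt (D.edgeTurn S a b) q :=
  StereoChart.continuousAt_turn (isArcBetween_arc hab) (pole_notMem_arc hS hab) hq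

theorem exp_edgeTurn (hS : S.pole ∉ D.image univ) (hab : a ≠ b) (hq : q ∉ D.arc a b) :
    Complex.exp (D.edgeTurn S a b q) = S.disp q (D.vtx b) / S.disp q (D.vtx a) :=
  StereoChart.exp_turn (isArcBetween_arc hab) (pole_notMem_arc hS hab) hq

theorem exp_edgeTurn_add_edgeTurn (hS : S.pole ∉ D.image univ) (hbc : b ≠ c) (hca : c ≠ a)
    (hq₁ : q ∉ D.arc b c) (hq₂ : q ∉ D.arc c a) :
    Complex.exp (D.edgeTurn S b c q + D.edgeTurn S c a q) =
      S.disp q (D.vtx a) / S.disp q (D.vtx b) := by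
  have hc : S.disp q (D.vtx c) ≠ 0 := StereoChart.disp_ne_zero
    (fun h => hq₁ (h ▸ (isArcBetween_arc hbc).right_mem))
    (fun h => pole_notMem_arc hS hbc (h ▸ (isArcBetween_arc hbc).right_mem))
  rw [Complex.exp_add, exp_edgeTurn hS hbc hq₁, exp_edgeTurn hS hca hq₂]
  field_simp

theorem eventually_notMem_arc (h : [a, b, c].Nodup) (hp : p ∈ D.arc a b \ {D.vtx a, D.vtx b}) :
    ∀ᶠ q in 𝓝 p, q ∉ D.arc b c ∧ q ∉ D.arc c a := by
  have hbc : p ∉ D.arc b c := fun hpc =>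
    hp.2 (Or.inr (eq_vtx_of_mem_arc_of_mem_arc h hp.1 hpc))
  have hca : p ∉ D.arc c a := fun hpc =>
    hp.2 (Or.inl (eq_vtx_of_mem_arc_of_mem_arc (by grind) hpc hp.1))
  exact ((isClosed_arc (by grind)).isOpen_compl.eventually_mem hbc).and
    ((isClosed_arc (by grind)).isOpen_compl.eventually_mem hca)

theorem eventually_notMem_tri (h : [a, b, c].Nodup) (hp : p ∈ D.arc a b \ {D.vtx a, D.vtx b}) :
    ∀ᶠ q in 𝓝 p, q ∉ D.arc a b → q ∉ D.tri a b c := by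
  filter_upwards [eventually_notMem_arc h hp] with q hq hqab
  rw [tri, D.arc_symm a c]
  exact not_or.2 ⟨not_or.2 ⟨hqab, hq.1⟩, hq.2⟩

/-- The difference of the two windings is the winding of the quadrilateral `b c a d`, on which `p`
does not lie. -/
theorem exists_eventually_triWinding_sub_triWinding_eq [LocallyConnectedSpace X]
    (hS : S.pole ∉ D.image univ) (hc : [a, b, c].Nodup) (hd : [a, b, d].Nodup)
    (hp : p ∈ D.arc a b \ {D.vtx a, D.vtx b}) :
    ∃ k, ∀ᶠ q in 𝓝 p, D.triWinding S a b c q - D.triWinding S a b d q = k := by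
  let M : X → ℂ := fun q =>
    D.edgeTurn S b c q + D.edgeTurn S c a q - (D.edgeTurn S b d q + D.edgeTurn S d a q)
  obtain ⟨N, hN, hNo, hpN, hNc⟩ := locallyConnectedSpace_iff_subsets_isOpen_isConnected.1
    ‹_› p _ ((eventually_notMem_arc hc hp).and (eventually_notMem_arc hd hp))
  have hM : ContinuousOn M N := fun q hq => by
    obtain ⟨⟨h₁, h₂⟩, h₃, h₄⟩ := hN hq
    exact (((continuousAt_edgeTurn hS (by grind) h₁).add
      (continuousAt_edgeTurn hS (by grind) h₂)).sub ((continuousAt_edgeTurn hS (by grind) h₃).add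
      (continuousAt_edgeTurn hS (by grind) h₄))).continuousWithinAt
  have hexp : ∀ q ∈ N, Complex.exp (M q) = 1 := fun q hq => by
    obtain ⟨⟨h₁, h₂⟩, h₃, h₄⟩ := hN hq
    have hexpc := exp_edgeTurn_add_edgeTurn hS (by grind) (by grind) h₁ h₂
    have hexpd := exp_edgeTurn_add_edgeTurn hS (by grind) (by grind) h₃ h₄
    rw [Complex.exp_sub, hexpc, ← hexpd]
    exact div_self (Complex.exp_ne_zero _)
  refine ⟨M p, ?_⟩
  filter_upwards [hNo.mem_nhds hpN] with q hq
  rw [← eq_of_exp_comp_eq_one hNc.isPreconnected hM hexp hq hpN, triWinding, triWinding]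
  ring

section CompactSpace

variable [CompactSpace X] [LocallyConnectedSpace X]

theorem orient_eq_of_triOuter_subset (hS : S.pole ∉ D.image univ) (hc : [a, b, c].Nodup)
    (hd : [a, b, d].Nodup) (hO : D.triOuter S a b c ⊆ D.triOuter S a b d) :
    D.orient S a b d = D.orient S a b c := by
  have hab : IsArcBetween (D.arc a b) (D.vtx a) (D.vtx b) := isArcBetween_arc (by grind)
  obtain ⟨p, hp⟩ := closure_nonempty_iff.1 ⟨_, hab.subset_closure_diff hab.left_mem⟩
  obtain ⟨k, hk⟩ := exists_eventually_triWinding_sub_triWinding_eq hS hc hd hp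
  have hpc := arc_subset_tri (c := c) hp.1
  obtain ⟨r, hr, hkr⟩ := ((mem_closure_iff_frequently.1
    (tri_subset_closure_triOuter hS hc hpc)).and_eventually hk).exists
  obtain ⟨q, hq, hkq, hqd⟩ := ((mem_closure_iff_frequently.1
    (tri_subset_closure_triInner hS hc hpc)).and_eventually
      (hk.and (eventually_notMem_tri hd hp))).exists
  rw [hr.2, (hO hr).2, sub_zero] at hkr
  have hcd : D.triWinding S a b d q = D.triWinding S a b c q := by
    rw [← hkr, sub_eq_zero] at hkq
    exact hkq.symm
  have hqd' : q ∈ D.triInner S a b d := ⟨hqd fun h => hq.1 (arc_subset_tri h), hcd ▸ hq.2⟩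
  rw [← triWinding_eq_orient hS hqd', hcd, triWinding_eq_orient hS hq]

theorem orient_eq_neg_of_eventually_mem_triInner (hS : S.pole ∉ D.image univ)
    (hc : [a, b, c].Nodup) (hd : [a, b, d].Nodup) (hp : p ∈ D.arc a b \ {D.vtx a, D.vtx b})
    (hI : ∀ᶠ q in 𝓝 p, q ∉ D.arc a b → q ∈ D.triInner S a b c ∨ q ∈ D.triInner S a b d) :
    D.orient S a b d = -D.orient S a b c := by
  obtain ⟨k, hk⟩ := exists_eventually_triWinding_sub_triWinding_eq hS hc hd hp
  obtain ⟨q, hq, hkq, hIq⟩ := ((mem_closure_iff_frequently.1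
    (tri_subset_closure_triOuter hS hc (arc_subset_tri hp.1))).and_eventually (hk.and hI)).exists
  obtain ⟨r, hr, hkr, hIr⟩ := ((mem_closure_iff_frequently.1
    (tri_subset_closure_triOuter hS hd (arc_subset_tri hp.1))).and_eventually (hk.and hI)).exists
  have hqd := (hIq fun h => hq.1 (arc_subset_tri h)).resolve_left fun h => h.2 hq.2
  have hrc := (hIr fun h => hr.1 (arc_subset_tri h)).resolve_right fun h => h.2 hr.2
  rw [hq.2, triWinding_eq_orient hS hqd, zero_sub] at hkq
  rw [hr.2, triWinding_eq_orient hS hrc, sub_zero] at hkr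
  rw [hkr, ← hkq, neg_neg]

end CompactSpace

end T2Space

end GoodDrawing

/-! ### Face-convexity -/

namespace GoodDrawing

variable {n : ℕ} {X : Type*} [TopologicalSpace X] {D : GoodDrawing n X} {S : StereoChart X}
  {F : Set X} {a b c d : Fin n} {p : X}

theorem IsFace.nonempty (hF : D.IsFace F) : F.Nonempty := by
  obtain ⟨q, hq, rfl⟩ := hF
  exact ⟨q, mem_connectedComponentIn hq⟩

theorem pole_notMem_image (hF : D.IsFace F) (hpF : S.pole ∈ F) : S.pole ∉ D.image univ := by
  obtain ⟨q, -, rfl⟩ := hF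
  exact connectedComponentIn_subset _ _ hpF

variable [T2Space X] [CompactSpace X] [LocallyConnectedSpace X]

theorem face_subset_triOuter (hF : D.IsFace F) (hpF : S.pole ∈ F) (h : [a, b, c].Nodup) :
    F ⊆ D.triOuter S a b c := by
  have hS := pole_notMem_image hF hpF
  obtain ⟨q, -, rfl⟩ := hF
  refine subset_triOuter hS h isPreconnected_connectedComponentIn ?_ (pole_mem_triOuter hS h) hpF
  exact disjoint_compl_left.mono (connectedComponentIn_subset _ _)
    (tri_subset_image (mem_univ a) (mem_univ b) (mem_univ c) h)

theorem convexDisc_triInner_union_tri (hF : D.FaceConvex F) (hpF : S.pole ∈ F)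
    (h : [a, b, c].Nodup) : D.ConvexDisc (D.triInner S a b c ∪ D.tri a b c) := by
  have hS := pole_notMem_image hF.1 hpF
  have hpole := pole_mem_triOuter hS h
  obtain ⟨q, hq⟩ := triInner_nonempty hS h
  refine hF.2 a b c (by grind) (by grind) (by grind) _ ⟨q, hq.1, ?_⟩ fun hsub =>
    (hsub hpF).elim (fun hp => hp.2 hpole.2) hpole.1
  rw [triInner_eq_connectedComponentIn hS hq]

theorem isClosedSide_subset (hF : D.IsFace F) (hpF : S.pole ∈ F) (h : [a, b, c].Nodup)
    {Δ : Set X} (hΔ : IsClosedSide (D.tri a b c) Δ) (hFΔ : ¬F ⊆ Δ) :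
    Δ ⊆ D.triInner S a b c ∪ D.tri a b c := by
  obtain ⟨r, -, rfl⟩ := hΔ
  refine union_subset_union_left _ fun q hq => ⟨connectedComponentIn_subset _ _ hq, fun h0 => ?_⟩
  have hqO : q ∈ D.triOuter S a b c := ⟨connectedComponentIn_subset _ _ hq, h0⟩
  have hFO := face_subset_triOuter hF hpF h
  rw [triOuter_eq_connectedComponentIn (pole_notMem_image hF hpF) h] at hqO hFO
  rw [connectedComponentIn_eq hqO, ← connectedComponentIn_eq hq] at hFO
  exact hFΔ (hFO.trans subset_union_left)

theorem tri_subset_of_vtx_mem_triInner (hF : D.FaceConvex F) (hpF : S.pole ∈ F)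
    (hd : D.vtx d ∈ D.triInner S a b c) :
    D.tri a b d ⊆ D.triInner S a b c ∪ D.tri a b c := by
  have h := nodup_of_vtx_mem_triInner hd
  have hconv := convexDisc_triInner_union_tri hF hpF (a := a) (b := b) (c := c) (by grind)
  have hab : IsArcBetween (D.arc a b) (D.vtx a) (D.vtx b) := isArcBetween_arc (by grind)
  have ha := subset_union_right (s := D.triInner S a b c) (arc_subset_tri (c := c) hab.left_mem)
  have hb := subset_union_right (s := D.triInner S a b c) (arc_subset_tri (c := c) hab.right_mem)
  exact union_subset (union_subset (hconv a b (by grind) ha hb)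
    (hconv b d (by grind) hb (Or.inl hd))) (hconv a d (by grind) ha (Or.inl hd))

theorem triOuter_subset_of_vtx_mem_triInner (hF : D.FaceConvex F) (hpF : S.pole ∈ F)
    (hd : D.vtx d ∈ D.triInner S a b c) : D.triOuter S a b c ⊆ D.triOuter S a b d := by
  have hS := pole_notMem_image hF.1 hpF
  have h := nodup_of_vtx_mem_triInner hd
  have hpole : S.pole ∈ D.triOuter S a b c := pole_mem_triOuter hS (by grind)
  refine subset_triOuter hS (by grind) ?_ ?_ (pole_mem_triOuter hS (by grind)) hpole
  · rw [triOuter_eq_connectedComponentIn hS (by grind)]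
    exact isPreconnected_connectedComponentIn
  · refine disjoint_left.2 fun q hq hqd => ?_
    exact (tri_subset_of_vtx_mem_triInner hF hpF hd hqd).elim (fun hi => hi.2 hq.2) hq.1

theorem orient_eq_of_vtx_mem_triInner (hF : D.FaceConvex F) (hpF : S.pole ∈ F)
    (hd : D.vtx d ∈ D.triInner S a b c) : D.orient S a b d = D.orient S a b c := by
  have h := nodup_of_vtx_mem_triInner hd
  exact orient_eq_of_triOuter_subset (pole_notMem_image hF.1 hpF) (by grind) (by grind)
    (triOuter_subset_of_vtx_mem_triInner hF hpF hd)

theorem orient_eq_neg_of_onSide (hF : D.IsFace F) (hpF : S.pole ∈ F) {u v w x : Fin n}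
    (huv : u ≠ v) {C : Fin 2 → Set X} (hC : D.LocalSides u v p C) {i j : Fin 2} (hij : i ≠ j)
    (hw : D.OnSide F u v p C i w) (hx : D.OnSide F u v p C j x) :
    D.orient S u v x = -D.orient S u v w := by
  obtain ⟨hp, hpu, hpv, V, hV, hCV, -⟩ := hC
  obtain ⟨hwu, hwv, Δ, hΔ, hFΔ, Vw, hVw, hCw⟩ := hw
  obtain ⟨hxu, hxv, Δ', hΔ', hFΔ', Vx, hVx, hCx⟩ := hx
  have hw : [u, v, w].Nodup := by grind
  have hx : [u, v, x].Nodup := by grind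
  have hp' : p ∈ D.arc u v \ {D.vtx u, D.vtx v} := ⟨hp, by simp [hpu, hpv]⟩
  have hCij : C i ∪ C j = V \ D.arc u v := by
    obtain ⟨rfl, rfl⟩ | ⟨rfl, rfl⟩ : i = 0 ∧ j = 1 ∨ i = 1 ∧ j = 0 := by omega
    exacts [hCV, union_comm (C 1) _ ▸ hCV]
  refine orient_eq_neg_of_eventually_mem_triInner (pole_notMem_image hF hpF) hw hx hp' ?_
  filter_upwards [hV, hVw, hVx, eventually_notMem_tri hw hp', eventually_notMem_tri hx hp']
    with q hqV hqw hqx htw htx hq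
  have hqC : q ∈ C i ∪ C j := hCij ▸ ⟨hqV, hq⟩
  refine hqC.imp (fun h => ?_) fun h => ?_
  · exact (isClosedSide_subset hF hpF hw hΔ hFΔ (hCw ⟨h, hqw⟩)).resolve_right (htw hq)
  · exact (isClosedSide_subset hF hpF hx hΔ' hFΔ' (hCx ⟨h, hqx⟩)).resolve_right (htx hq)

/-! ### Convex hulls -/

/-- If `c d` crossed `a b`, it would meet both local sides of `a b` at the crossing, so neither
could be encircled by the triangle `a b c`. -/
theorem disjoint_arc_of_subset_closure (hS : S.pole ∉ D.image univ) (h : [a, b, c, d].Nodup)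
    {G : Set X} (hG : IsPreconnected G) (hpG : S.pole ∈ G) (hGt : Disjoint G (D.tri a b c))
    (hcl : D.arc c d ⊆ closure G) : Disjoint (D.arc a b) (D.arc c d) := by
  refine disjoint_left.2 fun z hab hcd => ?_
  have habc : [a, b, c].Nodup := by grind
  have hz : z ∈ D.arc a b \ {D.vtx a, D.vtx b} := by
    refine ⟨hab, ?_⟩
    rintro (rfl | rfl)
    · exact D.vtx_not_mem c d a (by grind) (by grind) (by grind) hcd
    · exact D.vtx_not_mem c d b (by grind) (by grind) (by grind) hcd
  have hGO := subset_triOuter hS habc hG hGt (pole_mem_triOuter hS habc) hpG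
  have hcdO : D.arc c d ⊆ D.triOuter S a b c ∪ D.tri a b c :=
    hcl.trans ((closure_mono hGO).trans (closure_triOuter_subset hS habc))
  obtain ⟨-, -, hcross⟩ := ((D.indep_arcs a b c d (by grind) (by grind) (by grind) (by grind)
    (by grind) (by grind)).2 z ⟨hab, hcd⟩).1
  obtain ⟨V, hV, hVt, C₁, C₂, hC, -, hC₁, hC₂, hn₁, hn₂⟩ :=
    hcross _ (eventually_notMem_tri habc hz)
  have hside : ∀ K ⊆ V \ D.arc a b, IsPreconnected K → (D.arc c d ∩ K).Nonempty →
      K ⊆ D.triOuter S a b c := by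
    rintro K hKV hK ⟨y, hycd, hyK⟩
    have hKt : ∀ q ∈ K, q ∉ D.tri a b c := fun q hq => hVt (hKV hq).1 (hKV hq).2
    exact subset_triOuter hS habc hK (disjoint_left.2 hKt)
      ((hcdO hycd).resolve_right (hKt y hyK)) hyK
  have hVO : V \ D.arc a b ⊆ D.triOuter S a b c := hC ▸ union_subset
    (hside C₁ (hC ▸ subset_union_left) hC₁ hn₁) (hside C₂ (hC ▸ subset_union_right) hC₂ hn₂)
  obtain ⟨q, hq, hqV⟩ := ((mem_closure_iff_frequently.1
    (tri_subset_closure_triInner hS habc (arc_subset_tri hab))).and_eventually hV).exists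
  exact hq.2 (hVO ⟨hqV, fun h => hq.1 (arc_subset_tri h)⟩).2

theorem disjoint_arc_of_cycCurve_subset_closure (hS : S.pole ∉ D.image univ)
    {W : Set (Fin n)} {G : Set X} (hG : IsFaceOf (D.image W) G) (hpG : S.pole ∈ G) {m : ℕ}
    {c : Fin (m + 3) → Fin n} (hc : Function.Injective c) (hcW : ∀ k, c k ∈ W)
    (hcG : D.cycCurve c ⊆ closure G) {k l : Fin (m + 3)} (hkl : k ≠ l) (hlk : l ≠ k + 1)
    (hkl' : k ≠ l + 1) : Disjoint (D.arc (c k) (c (k + 1))) (D.arc (c l) (c (l + 1))) := by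
  obtain ⟨g, -, rfl⟩ := hG
  have hnd : [c k, c (k + 1), c l, c (l + 1)].Nodup := by
    simp [hc.eq_iff, hkl, hkl', hlk.symm]
  exact disjoint_arc_of_subset_closure hS hnd isPreconnected_connectedComponentIn hpG
    (disjoint_compl_left.mono (connectedComponentIn_subset _ _)
      (tri_subset_image (hcW k) (hcW (k + 1)) (hcW l) (by grind)))
    ((subset_iUnion (fun l => D.arc (c l) (c (l + 1))) l).trans hcG)

omit [T2Space X] [CompactSpace X] [LocallyConnectedSpace X] in
theorem sum_triWinding_fan {m : ℕ} [NeZero m] (c : Fin m → Fin n) (a : Fin n) (q : X) :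
    ∑ k, D.triWinding S a (c k) (c (k + 1)) q = ∑ k, D.edgeTurn S (c k) (c (k + 1)) q := by
  have hshift := Equiv.sum_comp (Equiv.addRight (1 : Fin m)) fun k => D.edgeTurn S a (c k) q
  simp only [Equiv.coe_addRight] at hshift
  simp only [triWinding, Finset.sum_add_distrib, edgeTurn_swap a, Finset.sum_neg_distrib, hshift]
  ring

theorem exists_vtx_mem_triInner_of_mem_hull (hS : S.pole ∉ D.image univ) (hpF : S.pole ∈ F)
    {W : Set (Fin n)} {Δ : Set X} (hΔ : D.IsHull F W Δ) {a w : Fin n} (haw : a ≠ w)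
    (hwW : w ∉ W) (hwΔ : D.vtx w ∈ Δ) : ∃ x ∈ W, ∃ y ∈ W, D.vtx w ∈ D.triInner S a x y := by
  obtain ⟨m, c, hc, hcW, ⟨G, hG, hFG, hfr⟩, ⟨q, -, rfl⟩, hdisj⟩ := hΔ
  have hcG : D.cycCurve c ⊆ closure G := hfr ▸ frontier_subset_closure
  let P : ArcCycle (m + 3) X := D.polygon c hc fun _ _ =>
    disjoint_arc_of_cycCurve_subset_closure hS hG (hFG hpF) hc hcW hcG
  have hne : ∀ k, c k ≠ c (k + 1) := fun k => hc.ne (by simp)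
  have hwc : ∀ k, w ≠ c k := fun k => (ne_of_mem_of_not_mem (hcW k) hwW).symm
  have hP : S.pole ∉ P.support := by
    rintro ⟨_, ⟨k, rfl⟩, hk⟩
    exact pole_notMem_arc hS (hne k) hk
  have hwP : D.vtx w ∉ P.support := by
    rintro ⟨_, ⟨k, rfl⟩, hk⟩
    exact D.vtx_not_mem _ _ w (hne k) (hwc k) (hwc (k + 1)) hk
  have hwind : P.winding S (D.vtx w) ≠ 0 := fun h0 => by
    have hwpole := (ArcCycle.winding_eq_zero_iff hP hwP).1 h0
    have hwq : D.vtx w ∈ connectedComponentIn P.supportᶜ q := hwΔ.resolve_right hwP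
    have hpole := mem_connectedComponentIn (F := P.supportᶜ) hP
    rw [connectedComponentIn_eq hwpole, ← connectedComponentIn_eq hwq] at hpole
    exact disjoint_left.1 hdisj hpF (Or.inl hpole)
  have hfan := sum_triWinding_fan (D := D) (S := S) c a (D.vtx w)
  obtain ⟨k, -, hk⟩ := Finset.exists_ne_zero_of_sum_ne_zero (hfan.trans_ne hwind)
  have hnd := nodup_of_triWinding_ne_zero hk
  have hwk := hwc k
  have hwk' := hwc (k + 1)
  exact ⟨c k, hcW k, c (k + 1), hcW (k + 1), vtx_notMem_tri (by grind), hk⟩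

end GoodDrawing

/-! ### Vertices on opposite sides of an edge -/

namespace GoodDrawing

variable {n : ℕ} {X : Type*} [TopologicalSpace X] {D : GoodDrawing n X} {S : StereoChart X}
  {F : Set X} {a b c d u v w x y : Fin n} {p : X}

theorem onSide_of_mem_sideSet {C : Fin 2 → Set X} {i : Fin 2} (hw : w ∈ D.SideSet F u v p C i)
    (hwu : w ≠ u) (hwv : w ≠ v) : D.OnSide F u v p C i w :=
  hw.resolve_left (by simp [hwu, hwv])

theorem orient_swap_right (D : GoodDrawing n X) (S : StereoChart X) (a b c : Fin n) :
    D.orient S a c b = -D.orient S a b c := by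
  rw [← orient_rotate, orient_swap, orient_rotate]

theorem triWinding_eq_zero_of_vtx_notMem_triInner (h : [a, b, c, d].Nodup)
    (hd : D.vtx d ∉ D.triInner S a b c) : D.triWinding S a b c (D.vtx d) = 0 :=
  of_not_not fun h0 => hd ⟨vtx_notMem_tri h, h0⟩

variable [T2Space X] [CompactSpace X] [LocallyConnectedSpace X]

theorem exists_mem_triInner_mem_triOuter (hS : S.pole ∉ D.image univ) (h : [a, b, c, d].Nodup)
    (hb : D.vtx b ∈ D.triOuter S d a c) :
    ∃ q ∈ D.triInner S a b c, q ∈ D.triOuter S d a c ∧ q ∉ D.arc b d := by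
  have hab : IsArcBetween (D.arc a b) (D.vtx a) (D.vtx b) := isArcBetween_arc (by grind)
  have hO : IsOpen (D.triOuter S d a c) := isOpen_triOuter hS (by grind)
  obtain ⟨p, hpO, hp⟩ := mem_closure_iff.1 (hab.subset_closure_diff hab.right_mem) _ hO hb
  have hbd : ∀ᶠ q in 𝓝 p, q ∉ D.arc b d ∧ q ∉ D.arc d a :=
    eventually_notMem_arc (by grind) hp
  obtain ⟨q, hq, hqO, hqbd, -⟩ := ((mem_closure_iff_frequently.1
    (tri_subset_closure_triInner (c := c) hS (by grind) (arc_subset_tri hp.1))).and_eventually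
      ((hO.eventually_mem hpO).and hbd)).exists
  exact ⟨q, hq, hqO, hqbd⟩

theorem vtx_notMem_triInner_of_orient_eq_neg (hF : D.FaceConvex F) (hpF : S.pole ∈ F)
    (hx : D.orient S u v x = -D.orient S u v w) : D.vtx w ∉ D.triInner S u v x := fun hw => by
  have h := nodup_of_vtx_mem_triInner hw
  rw [← orient_eq_of_vtx_mem_triInner hF hpF hw] at hx
  exact orient_ne_zero (pole_notMem_image hF.1 hpF) (by grind) (self_eq_neg.1 hx)

theorem vtx_notMem_triInner_of_orient_eq (hF : D.FaceConvex F) (hpF : S.pole ∈ F)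
    (hxy : D.orient S u v x = D.orient S u v y) : D.vtx v ∉ D.triInner S u x y := fun hv => by
  have h := nodup_of_vtx_mem_triInner hv
  have hux := orient_eq_of_vtx_mem_triInner hF hpF hv
  rw [← triInner_rotate, ← triInner_rotate] at hv
  have hyu := orient_eq_of_vtx_mem_triInner hF hpF hv
  have huvy : D.orient S u v y = -D.orient S u v y :=
    calc D.orient S u v y = D.orient S y u v := orient_rotate D S y u v
      _ = D.orient S y u x := hyu
      _ = D.orient S u x y := (orient_rotate D S y u x).symm
      _ = D.orient S u x v := hux.symm
      _ = -D.orient S u v x := orient_swap_right D S u v x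
      _ = -D.orient S u v y := by rw [hxy]
  exact orient_ne_zero (pole_notMem_image hF.1 hpF) (by grind) (self_eq_neg.1 huvy)

theorem orient_eq_neg_of_vtx_mem_triInner (hF : D.FaceConvex F) (hpF : S.pole ∈ F)
    (hu : D.vtx w ∈ D.triInner S u x y) (hv : D.vtx w ∈ D.triInner S v x y) :
    D.orient S v y w = -D.orient S u x y := by
  rw [← triInner_rotate] at hu hv
  have huw := orient_eq_of_vtx_mem_triInner hF hpF hu
  have hvw := orient_eq_of_vtx_mem_triInner hF hpF hv
  rw [← triInner_rotate] at hv
  have hyw := orient_eq_of_vtx_mem_triInner hF hpF hv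
  rw [orient_swap, hyw, orient_rotate, ← hvw, huw, orient_rotate]

/-- Compare the windings of the four triangles on `u`, `v`, `y`, `w` around a point encircled by
`u v w` but not by `y u w`. -/
theorem orient_eq_or_eq_two_mul (hF : D.FaceConvex F) (hpF : S.pole ∈ F) (huv : u ≠ v)
    (hy : D.orient S u v y = -D.orient S u v w) (hu : D.vtx w ∈ D.triInner S u x y)
    (hv : D.vtx w ∈ D.triInner S v x y) (hvu : D.vtx v ∉ D.triInner S u x y) :
    D.orient S u x y = D.orient S u v w ∨ D.orient S u x y = 2 * D.orient S u v w := by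
  have hS := pole_notMem_image hF.1 hpF
  have hndu := nodup_of_vtx_mem_triInner hu
  have hndv := nodup_of_vtx_mem_triInner hv
  have hvO : D.vtx v ∈ D.triOuter S y u w := by
    have hu' := hu
    rw [← triInner_rotate, ← triInner_rotate] at hu'
    refine triOuter_subset_of_vtx_mem_triInner hF hpF hu' ?_
    rw [triOuter_rotate, triOuter_rotate]
    exact ⟨vtx_notMem_tri (by grind), triWinding_eq_zero_of_vtx_notMem_triInner (by grind) hvu⟩
  obtain ⟨q, hq, hqO, hqvy⟩ := exists_mem_triInner_mem_triOuter hS (by grind) hvO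
  have huvy : q ∉ D.tri u v y := by
    rintro ((h | h) | h)
    exacts [hq.1 (arc_subset_tri h), hqvy h, hqO.1 (arc_subset_tri (D.arc_symm u y ▸ h))]
  have hvyw : q ∉ D.tri v y w := by
    rintro ((h | h) | h)
    exacts [hqvy h, hqO.1 (Or.inr h), hq.1 (Or.inl (Or.inr h))]
  have hsum := triWinding_add_triWinding_add_triWinding (D := D) (S := S) u v y w q
  have huvy' := triWinding_eq_zero_or_eq_orient hS huvy
  have hvyw' := triWinding_eq_zero_or_eq_orient hS hvyw
  rw [triWinding_eq_orient hS hq, hqO.2] at hsum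
  rw [hy] at huvy'
  rw [orient_eq_neg_of_vtx_mem_triInner hF hpF hu hv] at hvyw'
  have hε : D.orient S u v w ≠ 0 := orient_ne_zero hS (by grind)
  grind

theorem vtx_notMem_triInner_of_orient_eq_neg_of_orient_eq_neg (hF : D.FaceConvex F)
    (hpF : S.pole ∈ F) (h : [u, v, w].Nodup) (hvx : v ≠ x) (hvy : v ≠ y)
    (hx : D.orient S u v x = -D.orient S u v w) (hy : D.orient S u v y = -D.orient S u v w) :
    D.vtx w ∉ D.triInner S u x y := fun hu => by
  have hnd := nodup_of_vtx_mem_triInner hu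
  have hv : D.vtx w ∈ D.triInner S v x y := by
    have hsum := triWinding_add_triWinding_add_triWinding (D := D) (S := S) u x y v (D.vtx w)
    have hwx := triWinding_eq_zero_of_vtx_notMem_triInner (by grind)
      (vtx_notMem_triInner_of_orient_eq_neg hF hpF hx)
    have hwy := triWinding_eq_zero_of_vtx_notMem_triInner (by grind)
      (vtx_notMem_triInner_of_orient_eq_neg hF hpF hy)
    rw [triWinding_rotate v u x, triWinding_swap u v x, hwx, triWinding_rotate v x y,
      ← triWinding_rotate y u v, hwy, neg_zero, zero_add, add_zero] at hsum
    exact ⟨vtx_notMem_tri (by grind), hsum.trans_ne hu.2⟩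
  have hu' : D.vtx w ∈ D.triInner S u y x := by rwa [triInner_swap_right]
  have hv' : D.vtx w ∈ D.triInner S v y x := by rwa [triInner_swap_right]
  have hxy := orient_eq_or_eq_two_mul hF hpF (by grind) hy hu hv
    (vtx_notMem_triInner_of_orient_eq hF hpF (hx.trans hy.symm))
  have hyx := orient_eq_or_eq_two_mul hF hpF (by grind) hx hu' hv'
    (vtx_notMem_triInner_of_orient_eq hF hpF (hy.trans hx.symm))
  rw [orient_swap_right] at hyx
  have hε := orient_ne_zero (pole_notMem_image hF.1 hpF) h
  grind

end GoodDrawing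

open GoodDrawing in
theorem oppSide_not_in_hull_general {n : ℕ} {X : Type*} [TopologicalSpace X] [T2Space X]
    [CompactSpace X] [LocallyConnectedSpace X] {D : GoodDrawing n X} {F : Set X}
    {S : StereoChart X} (hF : D.FaceConvex F) (hpF : S.pole ∈ F) {u v w : Fin n} (huv : u ≠ v)
    {p : X} {i j : Fin 2} (hij : i ≠ j) {C : Fin 2 → Set X} (hC : D.LocalSides u v p C)
    {W : Set (Fin n)} (hW : W ⊆ D.SideSet F u v p C j) {Δ : Set X} (hΔ : D.IsHull F W Δ)
    (hw : w ∈ D.SideSet F u v p C i) (hwu : w ≠ u) (hwv : w ≠ v) : D.vtx w ∉ Δ := by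
  intro hwΔ
  have hS : S.pole ∉ D.image univ := pole_notMem_image hF.1 hpF
  have hopp : ∀ x ∈ W, x ≠ u → x ≠ v → D.orient S u v x = -D.orient S u v w :=
    fun x hx hxu hxv => orient_eq_neg_of_onSide hF.1 hpF huv hC hij
      (onSide_of_mem_sideSet hw hwu hwv) (onSide_of_mem_sideSet (hW hx) hxu hxv)
  have hwW : w ∉ W := fun h =>
    orient_ne_zero hS (by grind) (self_eq_neg.1 (hopp w h hwu hwv))
  obtain ⟨x, hx, y, hy, hxy⟩ :=
    exists_vtx_mem_triInner_of_mem_hull hS hpF hΔ hwu.symm hwW hwΔ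
  have hnd := nodup_of_vtx_mem_triInner hxy
  have hx' := hopp x hx (by grind)
  have hy' := hopp y hy (by grind)
  rcases eq_or_ne v x with rfl | hvx
  · exact vtx_notMem_triInner_of_orient_eq_neg hF hpF (hy' (by grind)) hxy
  rcases eq_or_ne v y with rfl | hvy
  · rw [triInner_swap_right] at hxy
    exact vtx_notMem_triInner_of_orient_eq_neg hF hpF (hx' (by grind)) hxy
  exact vtx_notMem_triInner_of_orient_eq_neg_of_orient_eq_neg hF hpF (by grind) hvx hvy
    (hx' hvx.symm) (hy' hvy.symm) hxy

instance : Fact (Module.finrank ℝ (EuclideanSpace ℝ (Fin 3)) = 2 + 1) := ⟨by simp⟩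

/-- Stereographic projection from the point `o` of the sphere. -/
def sphereChart (o : SpherePt) : StereoChart SpherePt where
  coord := (stereographic' 2 o).trans
    Complex.orthonormalBasisOneI.repr.symm.toHomeomorph.toOpenPartialHomeomorph
  pole := o
  source_eq := by simp
  target_eq := by simp

instance : LocallyConnectedSpace SpherePt :=
  ChartedSpace.locallyConnectedSpace (EuclideanSpace ℝ (Fin 2)) _

/-- No vertex of `Side(uv,i) \ {u,v}` has its point in the convex hull of
`(W ∪ {u,v}) ∩ Side(uv,j)`, where `{i,j} = {1,2}`. -/
theorem oppSide_not_in_hull (n : ℕ) (D : GoodDrawing n SpherePt)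
    (F : Set SpherePt) (hFC : D.FaceConvex F) (u v : Fin n) (huv : u ≠ v)
    (W : Set (Fin n)) (i j : Fin 2) (hij : i ≠ j)
    (p : SpherePt) (C : Fin 2 → Set SpherePt) (hC : D.LocalSides u v p C)
    (hcard : 3 ≤ ((W ∪ {u, v}) ∩ D.SideSet F u v p C j).ncard)
    (Δ : Set SpherePt) (hΔ : D.IsHull F ((W ∪ {u, v}) ∩ D.SideSet F u v p C j) Δ) :
    ∀ w ∈ D.SideSet F u v p C i, w ≠ u → w ≠ v → D.vtx w ∉ Δ := by
  intro w hw hwu hwv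
  obtain ⟨o, ho⟩ := hFC.1.nonempty
  exact oppSide_not_in_hull_general (S := sphereChart o) hFC ho huv hij hC inter_subset_right hΔ
    hw hwu hwv

end
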